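/- arXiv:2305.08606 — 2 statements merged into one kernel-verified Lean document; each statement's English description precedes it below -/
import Mathlib

section
/- Let p be a complex polynomial of degree n with n > 1, and define q(z) = z − conj(p(z)). Then the zero set {z ∈ ℂ : q(z) = 0}, equivalently the set of solutions of conj(z) = p(z), is finite and has at most 3n − 2 elements. -/
open Complex Polynomial

/-!
Call a fixed point `z` of the antiholomorphic map `z ↦ conj (p z)` repelling if `|p' z| > 1`.

*Nonrepelling fixed points.* Such a point is an attracting or parabolic fixed point of the
polynomial `p̄ ∘ p`, so by Fatou's theorem its basin contains a critical point of `p̄ ∘ p`, and then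
also one of `p`. Basins of distinct points are disjoint, so there are at most `n - 1` of them. The
existence of the critical point is a Schwarz lemma argument: otherwise all inverse branches of the
iterates extend to balls in the bounded basin, which bounds the derivatives of the iterates along an
orbit from below.

*Repelling fixed points.* The form `⟨f, g⟩ = ∑ g(z) conj (f (conj (p z))) / F'(z)`, summed over the
roots of `F = p̄ ∘ p - z`, is nondegenerate on the polynomials of degree less than `n ^ 2`. By the
Euler–Jacobi vanishing theorem it is zero on the span of the `z ^ a p ^ b` with `a + b ≤ n - 2`,
which has dimension `n (n - 1) / 2`. On the multiples of a polynomial vanishing to half order at all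
the other roots of `F`, it is the sum of `g conj f / (|p'| ^ 2 - 1)` over the repelling fixed
points, hence positive semidefinite. Comparing dimensions, there are at most `n` more repelling than
nonrepelling fixed points, so the total is at most `(2 n - 1) + (n - 1) = 3 n - 2`.
-/

namespace KhavinsonSwiatek

open Filter Topology Bornology Metric
open scoped ComplexConjugate

section Basin

/-- The basin of `x` under `f`: the points whose forward orbit converges to `x`. It is not required
to be a neighbourhood of `x`, so parabolic fixed points have basins in this sense too. -/
def basin {α : Type*} [TopologicalSpace α] (f : α → α) (x : α) : Set α :=
  {z | Tendsto (fun k => f^[k] z) atTop (𝓝 x)}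

lemma iterate_mem_basin_iff {α : Type*} [TopologicalSpace α] {f : α → α} {x z : α} (k : ℕ) :
    f^[k] z ∈ basin f x ↔ z ∈ basin f x := by
  simp only [basin, Set.mem_ofPred_eq, ← Function.iterate_add_apply]
  exact tendsto_add_atTop_iff_nat (f := fun j => f^[j] z) k

lemma mem_basin_of_commute {α : Type*} [TopologicalSpace α] {f g : α → α} {x z : α}
    (hg : ContinuousAt g x) (hfg : Function.Commute g f) (hz : z ∈ basin f x) :
    g z ∈ basin f (g x) :=
  (hg.tendsto.comp hz).congr fun k => hfg.iterate_right k z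

lemma basin_mem_nhds {𝕜 : Type*} [NontriviallyNormedField 𝕜] {f : 𝕜 → 𝕜} {f' x : 𝕜}
    (hf : HasDerivAt f f' x) (hfix : f x = x) (hf' : ‖f'‖ < 1) : basin f x ∈ 𝓝 x := by
  obtain ⟨lam, hlam', hlam1⟩ := exists_between hf'
  have hlam0 : 0 ≤ lam := (norm_nonneg _).trans hlam'.le
  obtain ⟨r, hr, hcontr⟩ : ∃ r > 0, ∀ z ∈ ball x r, ‖f z - x‖ ≤ lam * ‖z - x‖ := by
    have hslope := hf.tendsto_slope.norm.eventually_lt_const hlam'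
    rw [eventually_nhdsWithin_iff, eventually_nhds_iff_ball] at hslope
    obtain ⟨r, hr, h⟩ := hslope
    refine ⟨r, hr, fun z hz => ?_⟩
    rcases eq_or_ne z x with rfl | hzx
    · simp [hfix]
    · have hlt := h z hz hzx
      rw [slope_def_field, norm_div, div_lt_iff₀ (norm_sub_pos_iff.mpr hzx), hfix] at hlt
      exact hlt.le
  refine mem_of_superset (ball_mem_nhds x hr) fun z hz => ?_
  have hgeom (k : ℕ) : ‖f^[k] z - x‖ ≤ lam ^ k * ‖z - x‖ := by
    induction k with
    | zero => simp
    | succ k ih =>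
      have hmem : f^[k] z ∈ ball x r := by
        rw [mem_ball_iff_norm] at hz ⊢
        exact (ih.trans (mul_le_of_le_one_left (norm_nonneg _)
          (pow_le_one₀ hlam0 hlam1.le))).trans_lt hz
      calc ‖f^[k + 1] z - x‖ = ‖f (f^[k] z) - x‖ := by rw [Function.iterate_succ_apply']
        _ ≤ lam * ‖f^[k] z - x‖ := hcontr _ hmem
        _ ≤ lam * (lam ^ k * ‖z - x‖) := by gcongr
        _ = lam ^ (k + 1) * ‖z - x‖ := by ring
  refine tendsto_iff_norm_sub_tendsto_zero.mpr (squeeze_zero (fun _ => norm_nonneg _) hgeom ?_)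
  simpa using (tendsto_pow_atTop_nhds_zero_of_lt_one hlam0 hlam1).mul_const ‖z - x‖

variable {Q : ℂ[X]} {z₀ : ℂ}

lemma eventually_norm_le_norm_eval (hQ : 1 < Q.natDegree) :
    ∀ᶠ z in cobounded ℂ, ‖z‖ ≤ ‖Q.eval z‖ := by
  have hdeg : 0 < Q.divX.degree := by
    rw [← natDegree_pos_iff_degree_pos, natDegree_divX_eq_natDegree_tsub_one]
    omega
  filter_upwards [(Q.divX.tendsto_norm_atTop hdeg tendsto_norm_cobounded_atTop).eventually_ge_atTop
    2, tendsto_norm_cobounded_atTop.eventually_ge_atTop ‖Q.coeff 0‖] with z hdivX hcoeff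
  have hsplit : Q.eval z = Q.divX.eval z * z + Q.coeff 0 := by
    conv_lhs => rw [← divX_mul_X_add Q]
    simp
  calc ‖z‖ ≤ 2 * ‖z‖ - ‖Q.coeff 0‖ := by linarith
    _ ≤ ‖Q.divX.eval z‖ * ‖z‖ - ‖Q.coeff 0‖ := by gcongr
    _ ≤ ‖Q.eval z‖ := by
      rw [hsplit, ← norm_mul]
      exact norm_sub_le_norm_add _ _

lemma isBounded_basin (hQ : 1 < Q.natDegree) (z₀ : ℂ) : IsBounded (basin (Q.eval ·) z₀) := by
  obtain ⟨M, -, hM⟩ := (hasBasis_cobounded_compl_closedBall (0 : ℂ)).eventually_iff.mp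
    (eventually_norm_le_norm_eval hQ)
  refine isBounded_iff_forall_norm_le.mpr ⟨max M ‖z₀‖, fun z hz => ?_⟩
  by_contra! hlt
  obtain ⟨hzM, hzz₀⟩ := max_lt_iff.mp hlt
  have hgrow (k : ℕ) : ‖z‖ ≤ ‖(Q.eval ·)^[k] z‖ := by
    induction k with
    | zero => simp
    | succ k ih =>
      rw [Function.iterate_succ_apply']
      exact ih.trans (hM (by simpa using hzM.trans_le ih))
  exact (ge_of_tendsto' hz.norm hgrow).not_gt hzz₀

lemma exists_hasDerivAt_rightInverse_eval {f : ℂ[X]} {U : Set ℂ} {a : ℂ} (hU : IsOpen U)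
    (hconv : Convex ℝ U) (ha : f.eval a ∈ U)
    (hcrit : ∀ z, f.eval z ∈ U → f.derivative.eval z ≠ 0) :
    ∃ H : ℂ → ℂ, H (f.eval a) = a ∧
      ∀ w ∈ U, f.eval (H w) = w ∧ HasDerivAt H (f.derivative.eval (H w))⁻¹ w := by
  have hcov := (isCoveringMapOn_eval f).mono (t := U) (by
    rintro w hw ⟨z, hz, rfl⟩
    exact hcrit z hw hz)
  have : ContractibleSpace U := hconv.contractibleSpace ⟨_, ha⟩
  have : LocallyPathConnectedSpace U := hU.locallyPathConnectedSpace
  obtain ⟨h, ⟨h_base, h_lift⟩, -⟩ := hcov.existsUnique_continuousMap_lifts (A := U)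
    ⟨Subtype.val, continuous_subtype_val⟩ (a₀ := ⟨_, ha⟩) (e₀ := a) rfl Subtype.prop
  let H := Function.extend (Subtype.val : U → ℂ) h 0
  have hH (w : U) : H w = h w := Subtype.val_injective.extend_apply _ _ _
  have hHcont : ContinuousOn H U := by
    rw [continuousOn_iff_continuous_domRestrict]
    exact h.continuous.congr fun w => (hH w).symm
  have hright (w : ℂ) (hw : w ∈ U) : f.eval (H w) = w := by
    rw [hH ⟨w, hw⟩]
    exact congrFun h_lift ⟨w, hw⟩
  refine ⟨H, (hH ⟨_, ha⟩).trans h_base, fun w hw => ⟨hright w hw, ?_⟩⟩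
  refine (f.hasDerivAt (H w)).of_local_left_inverse (hHcont.continuousAt (hU.mem_nhds hw))
    (hcrit _ (by rwa [hright w hw])) ?_
  filter_upwards [hU.mem_nhds hw] using hright

-- The Schwarz lemma for the branch of `f⁻¹` on the ball that takes `f a` to `a`.
lemma radius_le_mul_norm_derivative_eval {f : ℂ[X]} {a : ℂ} {r M : ℝ} (hr : 0 < r)
    (hcrit : ∀ z, f.eval z ∈ ball (f.eval a) r → f.derivative.eval z ≠ 0)
    (hM : ∀ z, f.eval z ∈ ball (f.eval a) r → dist z a ≤ M) :
    r ≤ M * ‖f.derivative.eval a‖ := by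
  have ha : f.eval a ∈ ball (f.eval a) r := mem_ball_self hr
  obtain ⟨H, hHa, hH⟩ :=
    exists_hasDerivAt_rightInverse_eval isOpen_ball (convex_ball _ r) ha hcrit
  have hschwarz : ‖deriv H (f.eval a)‖ ≤ M / r := by
    refine norm_deriv_le_div_of_mapsTo_ball
      (fun w hw => (hH w hw).2.differentiableAt.differentiableWithinAt) (fun w hw => ?_) hr
    rw [hHa]
    exact hM _ (by rwa [(hH w hw).1])
  rwa [(hH _ ha).2.deriv, hHa, norm_inv, le_div_iff₀ hr,
    inv_mul_le_iff₀ (norm_pos_iff.mpr (hcrit a ha)), mul_comm] at hschwarz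

lemma derivative_iterate_comp_X_eval (Q : ℂ[X]) (k : ℕ) (z : ℂ) :
    (Q.comp^[k] X).derivative.eval z =
      ∏ j ∈ Finset.range k, Q.derivative.eval ((Q.eval ·)^[j] z) := by
  induction k with
  | zero => simp
  | succ k ih =>
    rw [Function.iterate_succ_apply', derivative_comp, eval_mul, eval_comp, ih,
      iterate_comp_eval, eval_X, Finset.prod_range_succ]

lemma exists_radius_le_mul_norm_prod_derivative (hQ : 1 < Q.natDegree)
    (hcrit : ∀ c ∈ basin (Q.eval ·) z₀, Q.derivative.eval c ≠ 0) :
    ∃ M > 0, ∀ (x : ℂ) (k : ℕ) (r : ℝ), 0 < r →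
      ball ((Q.eval ·)^[k] x) r ⊆ basin (Q.eval ·) z₀ →
      r ≤ M * ‖∏ j ∈ Finset.range k, Q.derivative.eval ((Q.eval ·)^[j] x)‖ := by
  obtain ⟨M, hM⟩ := isBounded_iff.mp (isBounded_basin hQ z₀)
  refine ⟨max M 1, by positivity, fun x k r hr hball => ?_⟩
  have heval (z : ℂ) : (Q.comp^[k] X).eval z = (Q.eval ·)^[k] z := by
    rw [iterate_comp_eval, eval_X]
  have hbasin (z : ℂ) (hz : (Q.comp^[k] X).eval z ∈ ball ((Q.comp^[k] X).eval x) r) :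
      z ∈ basin (Q.eval ·) z₀ := by
    rw [heval, heval] at hz
    exact (iterate_mem_basin_iff k).mp (hball hz)
  rw [← derivative_iterate_comp_X_eval]
  refine radius_le_mul_norm_derivative_eval hr (fun z hz => ?_) fun z hz =>
    (hM (hbasin z hz) (hbasin x (mem_ball_self hr))).trans (le_max_left _ _)
  rw [derivative_iterate_comp_X_eval, Finset.prod_ne_zero_iff]
  exact fun j _ => hcrit _ ((iterate_mem_basin_iff j).mpr (hbasin z hz))

lemma exists_critical_mem_basin_of_attracting (hQ : 1 < Q.natDegree) (hfix : Q.eval z₀ = z₀)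
    (hmul : ‖Q.derivative.eval z₀‖ < 1) :
    ∃ c ∈ basin (Q.eval ·) z₀, Q.derivative.eval c = 0 := by
  by_contra! hcrit
  obtain ⟨M, -, hM⟩ := exists_radius_le_mul_norm_prod_derivative hQ hcrit
  obtain ⟨r, hr, hball⟩ := Metric.mem_nhds_iff.mp (basin_mem_nhds (Q.hasDerivAt z₀) hfix hmul)
  have hiter (k : ℕ) : (Q.eval ·)^[k] z₀ = z₀ := Function.iterate_fixed hfix k
  have hle (k : ℕ) : r ≤ M * ‖Q.derivative.eval z₀‖ ^ k := by
    simpa [hiter] using hM z₀ k r hr (by rwa [hiter])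
  have hlim := (tendsto_pow_atTop_nhds_zero_of_lt_one (norm_nonneg _) hmul).const_mul M
  rw [mul_zero] at hlim
  exact (ge_of_tendsto' hlim hle).not_gt hr

end Basin

section Translation

variable {w : ℕ → ℂ} {c ρ : ℝ}

lemma re_add_mul_le_re_of_norm_sub_sub_le (hc : 0 ≤ c) (hw₀ : ρ < (w 0).re)
    (hw : ∀ k, ρ < (w k).re → ‖w (k + 1) - w k - c‖ ≤ c / 4) (k : ℕ) :
    (w 0).re + k * (c / 2) ≤ (w k).re := by
  induction k with
  | zero => simp
  | succ k ih =>
    have hk : 0 ≤ k * (c / 2) := by positivity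
    have hre := (abs_le.mp ((abs_re_le_norm _).trans (hw k (by linarith)))).1
    simp only [sub_re, ofReal_re] at hre
    push_cast
    linarith

lemma abs_im_le_re_of_norm_sub_sub_le (hc : 0 ≤ c) (hw₀ : ρ < (w 0).re)
    (hw : ∀ k, ρ < (w k).re → ‖w (k + 1) - w k - c‖ ≤ c / 4) (hsector : |(w 0).im| ≤ (w 0).re)
    (k : ℕ) : |(w k).im| ≤ (w k).re := by
  induction k with
  | zero => exact hsector
  | succ k ih =>
    have hk : 0 ≤ k * (c / 2) := by positivity
    have hstep := hw k (by linarith [re_add_mul_le_re_of_norm_sub_sub_le hc hw₀ hw k])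
    have hre := (abs_le.mp ((abs_re_le_norm _).trans hstep)).1
    have him := (abs_im_le_norm _).trans hstep
    simp only [sub_re, sub_im, ofReal_re, ofReal_im, sub_zero] at hre him
    linarith [abs_sub_abs_le_abs_sub (w (k + 1)).im (w k).im]

lemma tendsto_re_atTop_of_norm_sub_sub_le (hc : 0 < c) (hw₀ : ρ < (w 0).re)
    (hw : ∀ k, ρ < (w k).re → ‖w (k + 1) - w k - c‖ ≤ c / 4) :
    Tendsto (fun k => (w k).re) atTop atTop :=
  tendsto_atTop_mono (re_add_mul_le_re_of_norm_sub_sub_le hc.le hw₀ hw)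
    (tendsto_atTop_add_const_left _ _ (tendsto_natCast_atTop_atTop.atTop_mul_const (by positivity)))

lemma norm_le_norm_of_norm_sub_add_le {ζ ξ : ℂ} (hsector : |ζ.im| ≤ ζ.re) (hζ : 2 * c ≤ ζ.re)
    (h : ‖ξ - ζ + c‖ ≤ c / 4) : ‖ξ‖ ≤ ‖ζ‖ := by
  obtain ⟨hre₁, hre₂⟩ := abs_le.mp ((abs_re_le_norm _).trans h)
  obtain ⟨him₁, him₂⟩ := abs_le.mp ((abs_im_le_norm _).trans h)
  simp only [add_re, sub_re, ofReal_re, add_im, sub_im, ofReal_im, add_zero]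
    at hre₁ hre₂ him₁ him₂
  rw [← sq_le_sq₀ (norm_nonneg _) (norm_nonneg _), Complex.sq_norm, Complex.sq_norm,
    Complex.normSq_apply, Complex.normSq_apply]
  have hc : 0 ≤ c := by linarith
  have him : ζ.im * (ξ.im - ζ.im) ≤ ζ.re * (c / 4) :=
    (le_abs_self _).trans (abs_mul ζ.im _ ▸ mul_le_mul hsector (abs_le.mpr ⟨him₁, him₂⟩)
      (abs_nonneg _) (by linarith))
  nlinarith [hc]

end Translation

section Parabolic

/-- The coordinate `ζ = -1 / (a (z - z₀) ^ m)`, in which a map `z + a (z - z₀) ^ (m + 1) + ⋯` acts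
near `z₀` as a perturbation of the translation by `m`. At `z = z₀` it takes the junk value `0`. -/
noncomputable def fatouCoord (a z₀ : ℂ) (m : ℕ) (z : ℂ) : ℂ := (-(a * (z - z₀) ^ m))⁻¹

lemma fatouCoord_self (a z₀ : ℂ) {m : ℕ} (hm : m ≠ 0) : fatouCoord a z₀ m z₀ = 0 := by
  simp [fatouCoord, hm]

lemma exists_forall_norm_fatouCoord_gt {a z₀ : ℂ} {m : ℕ} (ha : a ≠ 0) (hm : m ≠ 0) {P : ℂ → Prop}
    (hP : ∀ᶠ z in 𝓝[≠] z₀, P z) : ∃ ρ ≥ 0, ∀ z, ρ < ‖fatouCoord a z₀ m z‖ → P z := by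
  rw [eventually_nhdsWithin_iff, eventually_nhds_iff_ball] at hP
  obtain ⟨δ, hδ, hball⟩ := hP
  refine ⟨(‖a‖ * δ ^ m)⁻¹, by positivity, fun z hz => hball z ?_ ?_⟩
  · by_contra hfar
    rw [mem_ball_iff_norm, not_lt] at hfar
    refine hz.not_ge ?_
    rw [fatouCoord, norm_inv, norm_neg, norm_mul, norm_pow]
    gcongr
  · rintro rfl
    rw [fatouCoord_self a z hm, norm_zero] at hz
    exact hz.not_ge (by positivity)

lemma exists_fatouCoord_eq {a z₀ : ℂ} {m : ℕ} (ha : a ≠ 0) (hm : m ≠ 0) {w : ℂ} (hw : w ≠ 0) :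
    ∃ z, fatouCoord a z₀ m z = w := by
  obtain ⟨u, hu⟩ := IsAlgClosed.exists_pow_nat_eq (-(a * w)⁻¹) (Nat.pos_of_ne_zero hm)
  refine ⟨z₀ + u, ?_⟩
  rw [fatouCoord, add_sub_cancel_left, hu]
  field_simp

lemma exists_fatouCoord_mem_sector {a : ℂ} (z₀ : ℂ) {m : ℕ} (ha : a ≠ 0) (hm : m ≠ 0) (t : ℝ) :
    ∃ x, t < (fatouCoord a z₀ m x).re ∧ |(fatouCoord a z₀ m x).im| ≤ (fatouCoord a z₀ m x).re := by
  obtain ⟨x, hx⟩ := exists_fatouCoord_eq (z₀ := z₀) ha hm (w := ((|t| + 1 : ℝ) : ℂ))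
    (ofReal_ne_zero.mpr (by positivity))
  refine ⟨x, ?_⟩
  rw [hx, ofReal_re, ofReal_im, abs_zero]
  exact ⟨lt_add_of_le_of_pos (le_abs_self t) one_pos, by positivity⟩

-- `|Im ζ| ≤ Re ζ` makes `‖ζ‖ ≤ 2 Re ζ`, and `ζ z / ζ x = ((z - z₀) / (x - z₀))⁻ᵐ` is near `1`.
lemma exists_forall_ball_half_re_fatouCoord_le (a z₀ : ℂ) (m : ℕ) :
    ∃ ε > 0, ∀ x ≠ z₀, |(fatouCoord a z₀ m x).im| ≤ (fatouCoord a z₀ m x).re →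
      ∀ z ∈ ball x (ε * ‖x - z₀‖), (fatouCoord a z₀ m x).re / 2 ≤ (fatouCoord a z₀ m z).re := by
  obtain ⟨ε, hε, hpow⟩ : ∃ ε > 0, ∀ w : ℂ, dist w 1 < ε → dist (w ^ m)⁻¹ 1 < 1 / 4 := by
    have hcont : ContinuousAt (fun w : ℂ => (w ^ m)⁻¹) 1 :=
      ContinuousAt.inv₀ (by fun_prop) (by simp)
    simpa using Metric.continuousAt_iff.mp hcont (1 / 4) (by norm_num)
  refine ⟨ε, hε, fun x hx hsector z hz => ?_⟩
  have hx' : x - z₀ ≠ 0 := sub_ne_zero.mpr hx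
  have hw : dist (((z - z₀) / (x - z₀)) ^ m)⁻¹ 1 < 1 / 4 := by
    refine hpow _ ?_
    rw [mem_ball_iff_norm] at hz
    rwa [dist_eq_norm, div_sub_one hx', sub_sub_sub_cancel_right, norm_div,
      div_lt_iff₀ (norm_pos_iff.mpr hx')]
  have hdist : ‖fatouCoord a z₀ m z - fatouCoord a z₀ m x‖ ≤ ‖fatouCoord a z₀ m x‖ * (1 / 4) := by
    have hratio : fatouCoord a z₀ m z =
        fatouCoord a z₀ m x * (((z - z₀) / (x - z₀)) ^ m)⁻¹ := by
      simp only [fatouCoord, div_pow, inv_div]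
      field_simp
    rw [hratio, ← mul_sub_one, norm_mul, ← dist_eq_norm _ (1 : ℂ)]
    gcongr
  have hre := (abs_le.mp ((abs_re_le_norm _).trans hdist)).1
  rw [sub_re] at hre
  have hnorm := norm_le_abs_re_add_abs_im (fatouCoord a z₀ m x)
  rw [abs_of_nonneg ((abs_nonneg _).trans hsector)] at hnorm
  linarith

variable {Q R : ℂ[X]} {z₀ : ℂ} {m : ℕ}

lemma exists_sub_X_eq_pow_mul (hQ : 1 < Q.natDegree) (hfix : Q.eval z₀ = z₀)
    (hmul : Q.derivative.eval z₀ = 1) :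
    ∃ (m : ℕ) (R : ℂ[X]), m ≠ 0 ∧ Q - X = (X - C z₀) ^ (m + 1) * R ∧ R.eval z₀ ≠ 0 := by
  have hne : Q - X ≠ 0 := by
    rintro h
    rw [sub_eq_zero.mp h, natDegree_X] at hQ
    exact lt_irrefl _ hQ
  have hmult : 1 < rootMultiplicity z₀ (Q - X) :=
    (one_lt_rootMultiplicity_iff_isRoot hne).mpr (by simp [hfix, hmul])
  obtain ⟨R, hR, hndvd⟩ := exists_eq_pow_rootMultiplicity_mul_and_not_dvd (Q - X) hne z₀
  refine ⟨rootMultiplicity z₀ (Q - X) - 1, R, by omega, ?_, fun h => hndvd (dvd_iff_isRoot.mpr h)⟩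
  rwa [Nat.sub_add_cancel hmult.le]

lemma eval_sub_eq_mul_one_add (hQR : Q - X = (X - C z₀) ^ (m + 1) * R) (z : ℂ) :
    Q.eval z - z₀ = (z - z₀) * (1 + (z - z₀) ^ m * R.eval z) := by
  have h := congrArg (eval z) hQR
  simp only [eval_sub, eval_X, eval_mul, eval_pow, eval_C] at h
  linear_combination h

lemma derivative_eval_eq_one_add (hQR : Q - X = (X - C z₀) ^ (m + 1) * R) (z : ℂ) :
    Q.derivative.eval z = 1 + (m + 1) * ((z - z₀) ^ m * R.eval z) +
      (z - z₀) ^ (m + 1) * R.derivative.eval z := by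
  have h := congrArg (fun f => eval z (derivative f)) hQR
  simp only [derivative_sub, derivative_X, derivative_mul, derivative_pow, derivative_C, eval_sub,
    eval_add, eval_mul, eval_pow, eval_X, eval_C, eval_one, sub_zero, mul_one,
    add_tsub_cancel_right, Nat.cast_add, Nat.cast_one] at h
  linear_combination h

lemma tendsto_inv_one_add_pow_sub_one_div (m : ℕ) :
    Tendsto (fun s : ℂ => (((1 + s) ^ m)⁻¹ - 1) / s) (𝓝[≠] 0) (𝓝 (-(m : ℂ))) := by
  have hadd : HasDerivAt (fun s : ℂ => 1 + s) 1 0 := (hasDerivAt_id 0).const_add 1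
  have hderiv : HasDerivAt (fun s : ℂ => ((1 + s) ^ m)⁻¹) (-(m : ℂ)) 0 := by
    simpa using (hadd.fun_pow m).fun_inv (by simp)
  refine hderiv.tendsto_slope.congr fun s => ?_
  simp [slope_def_field]

lemma tendsto_pow_mul_eval_punctured (z₀ : ℂ) (R : ℂ[X]) (hm : m ≠ 0) :
    Tendsto (fun z => (z - z₀) ^ m * R.eval z) (𝓝[≠] z₀) (𝓝 0) := by
  refine Tendsto.mono_left ?_ nhdsWithin_le_nhds
  have hcont : Continuous fun z => (z - z₀) ^ m * R.eval z := by fun_prop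
  simpa [hm] using hcont.tendsto z₀

lemma eventually_eval_ne (hm : m ≠ 0) (hQR : Q - X = (X - C z₀) ^ (m + 1) * R) :
    ∀ᶠ z in 𝓝[≠] z₀, Q.eval z ≠ z₀ := by
  have hone := (tendsto_pow_mul_eval_punctured z₀ R hm).const_add 1
  filter_upwards [hone.eventually_ne (add_zero (1 : ℂ) ▸ one_ne_zero), self_mem_nhdsWithin]
    with z hz hzz₀
  rw [← sub_ne_zero, eval_sub_eq_mul_one_add hQR]
  exact mul_ne_zero (sub_ne_zero.mpr hzz₀) hz

lemma tendsto_fatouCoord_eval_sub (hm : m ≠ 0) (hQR : Q - X = (X - C z₀) ^ (m + 1) * R)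
    (hR : R.eval z₀ ≠ 0) :
    Tendsto (fun z => fatouCoord (R.eval z₀) z₀ m (Q.eval z) - fatouCoord (R.eval z₀) z₀ m z)
      (𝓝[≠] z₀) (𝓝 m) := by
  have hRlim : Tendsto (R.eval ·) (𝓝[≠] z₀) (𝓝 (R.eval z₀)) :=
    R.continuous.continuousAt.tendsto.mono_left nhdsWithin_le_nhds
  have hs := tendsto_pow_mul_eval_punctured z₀ R hm
  have hs_ne : ∀ᶠ z in 𝓝[≠] z₀, (z - z₀) ^ m * R.eval z ≠ 0 := by
    filter_upwards [hRlim.eventually_ne hR, self_mem_nhdsWithin] with z hz hzz₀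
    exact mul_ne_zero (pow_ne_zero _ (sub_ne_zero.mpr hzz₀)) hz
  have hslope := (tendsto_inv_one_add_pow_sub_one_div m).comp
    (tendsto_nhdsWithin_of_tendsto_nhds_of_eventually_within _ hs hs_ne)
  have hlim := (hRlim.div_const (-R.eval z₀)).mul hslope
  rw [div_neg, div_self hR, neg_one_mul, neg_neg] at hlim
  refine hlim.congr' ?_
  filter_upwards [hs_ne] with z hz
  have hu : (z - z₀) ^ m ≠ 0 := left_ne_zero_of_mul hz
  have hRz : R.eval z ≠ 0 := right_ne_zero_of_mul hz
  rw [Function.comp_apply, fatouCoord, fatouCoord, eval_sub_eq_mul_one_add hQR, mul_pow,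
    ← mul_assoc, ← neg_mul, mul_inv]
  field_simp
  ring

/-- The derivative of `log (Q z - z₀)` with respect to `log (z - z₀)`. Its product along an orbit
compares the derivative of the iterate with the change of `z - z₀`. -/
noncomputable def relativeDeriv (Q : ℂ[X]) (z₀ z : ℂ) : ℂ :=
  Q.derivative.eval z * (z - z₀) / (Q.eval z - z₀)

lemma eventually_relativeDeriv_sub_one_eq (hm : m ≠ 0)
    (hQR : Q - X = (X - C z₀) ^ (m + 1) * R) :
    ∀ᶠ z in 𝓝[≠] z₀, relativeDeriv Q z₀ z - 1 = (z - z₀) ^ m *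
      ((m * R.eval z + (z - z₀) * R.derivative.eval z) / (1 + (z - z₀) ^ m * R.eval z)) := by
  filter_upwards [eventually_eval_ne hm hQR] with z hz
  rw [← sub_ne_zero, eval_sub_eq_mul_one_add hQR] at hz
  have hu := left_ne_zero_of_mul hz
  have hs := right_ne_zero_of_mul hz
  rw [relativeDeriv, eval_sub_eq_mul_one_add hQR, derivative_eval_eq_one_add hQR]
  field_simp
  ring

lemma tendsto_relativeDeriv_factor (hm : m ≠ 0) (R : ℂ[X]) (z₀ : ℂ) :
    Tendsto (fun z => (m * R.eval z + (z - z₀) * R.derivative.eval z) /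
      (1 + (z - z₀) ^ m * R.eval z)) (𝓝[≠] z₀) (𝓝 (m * R.eval z₀)) := by
  have hnum : Continuous fun z => m * R.eval z + (z - z₀) * R.derivative.eval z := by fun_prop
  have hden := (tendsto_pow_mul_eval_punctured z₀ R hm).const_add 1
  rw [add_zero] at hden
  simpa [Pi.div_def] using ((hnum.tendsto z₀).mono_left nhdsWithin_le_nhds).div hden one_ne_zero

lemma tendsto_relativeDeriv (hm : m ≠ 0) (hQR : Q - X = (X - C z₀) ^ (m + 1) * R) :
    Tendsto (relativeDeriv Q z₀) (𝓝[≠] z₀) (𝓝 1) := by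
  have hpow : Tendsto (fun z => (z - z₀) ^ m) (𝓝[≠] z₀) (𝓝 0) := by
    simpa using tendsto_pow_mul_eval_punctured z₀ 1 hm
  have hlim := (hpow.mul (tendsto_relativeDeriv_factor hm R z₀)).add_const 1
  rw [zero_mul, zero_add] at hlim
  refine hlim.congr' ?_
  filter_upwards [eventually_relativeDeriv_sub_one_eq hm hQR] with z hz
  rw [← hz, sub_add_cancel]

lemma tendsto_relativeDeriv_sub_one_mul_fatouCoord (hm : m ≠ 0)
    (hQR : Q - X = (X - C z₀) ^ (m + 1) * R) (hR : R.eval z₀ ≠ 0) :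
    Tendsto (fun z => (relativeDeriv Q z₀ z - 1) * fatouCoord (R.eval z₀) z₀ m z)
      (𝓝[≠] z₀) (𝓝 (-m)) := by
  have hlim := (tendsto_relativeDeriv_factor hm R z₀).div_const (-R.eval z₀)
  rw [div_neg, mul_div_cancel_right₀ _ hR] at hlim
  refine hlim.congr' ?_
  filter_upwards [eventually_relativeDeriv_sub_one_eq hm hQR, self_mem_nhdsWithin] with z hz hzz₀
  have hu : (z - z₀) ^ m ≠ 0 := pow_ne_zero _ (sub_ne_zero.mpr hzz₀)
  rw [hz, fatouCoord]
  field_simp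

lemma tendsto_relativeDeriv_sq_mul_fatouCoord_sub (hm : m ≠ 0)
    (hQR : Q - X = (X - C z₀) ^ (m + 1) * R) (hR : R.eval z₀ ≠ 0) :
    Tendsto (fun z => relativeDeriv Q z₀ z ^ 2 * fatouCoord (R.eval z₀) z₀ m (Q.eval z) -
      fatouCoord (R.eval z₀) z₀ m z) (𝓝[≠] z₀) (𝓝 (-m)) := by
  have hT := tendsto_relativeDeriv hm hQR
  have hlim := ((hT.pow 2).mul (tendsto_fatouCoord_eval_sub hm hQR hR)).add
    ((hT.add_const 1).mul (tendsto_relativeDeriv_sub_one_mul_fatouCoord hm hQR hR))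
  rw [show (1 : ℂ) ^ 2 * m + (1 + 1) * -m = -m by ring] at hlim
  exact hlim.congr fun z => by ring

lemma mem_basin_of_tendsto_re_fatouCoord {f : ℂ → ℂ} {a z : ℂ} (ha : a ≠ 0) (hm : m ≠ 0)
    (h : Tendsto (fun k => (fatouCoord a z₀ m (f^[k] z)).re) atTop atTop) : z ∈ basin f z₀ := by
  refine tendsto_def.mpr fun U hU => ?_
  obtain ⟨ρ, -, hρ⟩ := exists_forall_norm_fatouCoord_gt ha hm (mem_nhdsWithin_of_mem_nhds hU)
  filter_upwards [h.eventually_gt_atTop ρ] with k hk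
  exact hρ _ (hk.trans_le (re_le_norm _))

lemma exists_forall_re_fatouCoord_gt (hm : m ≠ 0) (hQR : Q - X = (X - C z₀) ^ (m + 1) * R)
    (hR : R.eval z₀ ≠ 0) :
    ∃ ρ ≥ 0, ∀ z, ρ < (fatouCoord (R.eval z₀) z₀ m z).re →
      z ≠ z₀ ∧ Q.eval z ≠ z₀ ∧
      ‖fatouCoord (R.eval z₀) z₀ m (Q.eval z) - fatouCoord (R.eval z₀) z₀ m z - (m : ℝ)‖ ≤ m / 4 ∧
      ‖relativeDeriv Q z₀ z ^ 2 * fatouCoord (R.eval z₀) z₀ m (Q.eval z) -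
        fatouCoord (R.eval z₀) z₀ m z + (m : ℝ)‖ ≤ m / 4 := by
  have hm4 : (0 : ℝ) < m / 4 := by positivity
  have htrans := (tendsto_iff_norm_sub_tendsto_zero.mp
    (tendsto_fatouCoord_eval_sub hm hQR hR)).eventually_le_const hm4
  have hpot := (tendsto_iff_norm_sub_tendsto_zero.mp
    (tendsto_relativeDeriv_sq_mul_fatouCoord_sub hm hQR hR)).eventually_le_const hm4
  simp only [sub_neg_eq_add] at hpot
  obtain ⟨ρ, hρ₀, hρ⟩ := exists_forall_norm_fatouCoord_gt hR hm
    (((eventually_mem_nhdsWithin.and (eventually_eval_ne hm hQR)).and htrans).and hpot)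
  refine ⟨ρ, hρ₀, fun z hz => ?_⟩
  obtain ⟨⟨⟨hz₁, hz₂⟩, hz₃⟩, hz₄⟩ := hρ z (hz.trans_le (re_le_norm _))
  exact ⟨hz₁, hz₂, mod_cast hz₃, mod_cast hz₄⟩

lemma exists_orbit_in_petal (hm : m ≠ 0) (hQR : Q - X = (X - C z₀) ^ (m + 1) * R)
    (hR : R.eval z₀ ≠ 0) :
    ∃ (x : ℂ) (ε : ℝ), 0 < ε ∧
      Tendsto (fun k => ‖fatouCoord (R.eval z₀) z₀ m ((Q.eval ·)^[k] x)‖) atTop atTop ∧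
      ∀ k, (Q.eval ·)^[k] x ≠ z₀ ∧
        ball ((Q.eval ·)^[k] x) (ε * ‖(Q.eval ·)^[k] x - z₀‖) ⊆ basin (Q.eval ·) z₀ ∧
        ‖relativeDeriv Q z₀ ((Q.eval ·)^[k] x) ^ 2 *
          fatouCoord (R.eval z₀) z₀ m ((Q.eval ·)^[k + 1] x)‖ ≤
          ‖fatouCoord (R.eval z₀) z₀ m ((Q.eval ·)^[k] x)‖ := by
  obtain ⟨ρ, hρ₀, hρ⟩ := exists_forall_re_fatouCoord_gt hm hQR hR
  obtain ⟨ε, hε, hball⟩ := exists_forall_ball_half_re_fatouCoord_le (R.eval z₀) z₀ m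
  obtain ⟨x, hxre, hxsector⟩ := exists_fatouCoord_mem_sector z₀ hR hm (2 * ρ + 2 * m)
  set ζ := fatouCoord (R.eval z₀) z₀ m
  have hstep (z : ℂ) (k : ℕ) (hk : ρ < (ζ ((Q.eval ·)^[k] z)).re) :
      ‖ζ ((Q.eval ·)^[k + 1] z) - ζ ((Q.eval ·)^[k] z) - (m : ℝ)‖ ≤ m / 4 := by
    rw [Function.iterate_succ_apply']
    exact (hρ _ hk).2.2.1
  have hpetal (z : ℂ) (hz : ρ < (ζ z).re) :
      Tendsto (fun k => (ζ ((Q.eval ·)^[k] z)).re) atTop atTop :=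
    tendsto_re_atTop_of_norm_sub_sub_le (by positivity) hz (hstep z)
  have hm₀ : (0 : ℝ) ≤ m := m.cast_nonneg
  have hxρ : ρ < (ζ x).re := by linarith
  refine ⟨x, ε, hε, tendsto_atTop_mono (fun k => re_le_norm _) (hpetal x hxρ), fun k => ?_⟩
  have hre := re_add_mul_le_re_of_norm_sub_sub_le hm₀ hxρ (hstep x) k
  have hk₀ : (0 : ℝ) ≤ k * (m / 2) := by positivity
  simp only [Function.iterate_zero, id_eq] at hre
  have hsector := abs_im_le_re_of_norm_sub_sub_le hm₀ hxρ (hstep x) hxsector k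
  obtain ⟨hne, -, -, hpot⟩ := hρ _ (show ρ < (ζ ((Q.eval ·)^[k] x)).re by linarith)
  refine ⟨hne, fun z hz => mem_basin_of_tendsto_re_fatouCoord hR hm (hpetal z ?_), ?_⟩
  · linarith [hball _ hne hsector z hz]
  · rw [Function.iterate_succ_apply']
    exact norm_le_norm_of_norm_sub_add_le hsector (by linarith) hpot

lemma norm_sq_mul_iterate_le {ζ : ℂ → ℂ} {x : ℂ} (hne : ∀ k, (Q.eval ·)^[k] x ≠ z₀)
    (hζ : ∀ k, ‖relativeDeriv Q z₀ ((Q.eval ·)^[k] x) ^ 2 * ζ ((Q.eval ·)^[k + 1] x)‖ ≤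
      ‖ζ ((Q.eval ·)^[k] x)‖) (k : ℕ) :
    ‖((∏ j ∈ Finset.range k, Q.derivative.eval ((Q.eval ·)^[j] x)) /
      ((Q.eval ·)^[k] x - z₀)) ^ 2 * ζ ((Q.eval ·)^[k] x)‖ ≤ ‖(1 / (x - z₀)) ^ 2 * ζ x‖ := by
  induction k with
  | zero => simp
  | succ k ih =>
    refine le_trans ?_ ih
    set D := ∏ j ∈ Finset.range k, Q.derivative.eval ((Q.eval ·)^[j] x)
    have hfactor : D * Q.derivative.eval ((Q.eval ·)^[k] x) / ((Q.eval ·)^[k + 1] x - z₀) =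
        D / ((Q.eval ·)^[k] x - z₀) * relativeDeriv Q z₀ ((Q.eval ·)^[k] x) := by
      have hu := sub_ne_zero.mpr (hne k)
      rw [Function.iterate_succ_apply', relativeDeriv]
      field_simp
    rw [Finset.prod_range_succ, hfactor, mul_pow, mul_assoc, norm_mul,
      norm_mul ((D / _) ^ 2) (ζ _)]
    exact mul_le_mul_of_nonneg_left (hζ k) (norm_nonneg _)

lemma exists_critical_mem_basin_of_parabolic (hQ : 1 < Q.natDegree) (hfix : Q.eval z₀ = z₀)
    (hmul : Q.derivative.eval z₀ = 1) :
    ∃ c ∈ basin (Q.eval ·) z₀, Q.derivative.eval c = 0 := by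
  by_contra! hcrit
  obtain ⟨M, hM₀, hM⟩ := exists_radius_le_mul_norm_prod_derivative hQ hcrit
  obtain ⟨m, R, hm, hQR, hR⟩ := exists_sub_X_eq_pow_mul hQ hfix hmul
  obtain ⟨x, ε, hε, htop, hx⟩ := exists_orbit_in_petal hm hQR hR
  set ζ := fatouCoord (R.eval z₀) z₀ m
  have hbound (k : ℕ) : ‖ζ ((Q.eval ·)^[k] x)‖ ≤ (M / ε) ^ 2 * ‖(1 / (x - z₀)) ^ 2 * ζ x‖ := by
    obtain ⟨hne, hball, -⟩ := hx k
    have hu : 0 < ‖(Q.eval ·)^[k] x - z₀‖ := norm_sub_pos_iff.mpr hne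
    have hD := hM x k _ (mul_pos hε hu) hball
    have hpot := norm_sq_mul_iterate_le (fun j => (hx j).1) (fun j => (hx j).2.2) k
    set D := ∏ j ∈ Finset.range k, Q.derivative.eval ((Q.eval ·)^[j] x)
    have hone : 1 ≤ M / ε * ‖D / ((Q.eval ·)^[k] x - z₀)‖ := by
      rwa [norm_div, div_mul_div_comm, one_le_div (by positivity)]
    calc ‖ζ ((Q.eval ·)^[k] x)‖
        ≤ (M / ε * ‖D / ((Q.eval ·)^[k] x - z₀)‖) ^ 2 * ‖ζ ((Q.eval ·)^[k] x)‖ :=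
          le_mul_of_one_le_left (norm_nonneg _) (one_le_pow₀ hone)
      _ = (M / ε) ^ 2 * ‖(D / ((Q.eval ·)^[k] x - z₀)) ^ 2 * ζ ((Q.eval ·)^[k] x)‖ := by
          rw [norm_mul, norm_pow]
          ring
      _ ≤ (M / ε) ^ 2 * ‖(1 / (x - z₀)) ^ 2 * ζ x‖ := by gcongr
  obtain ⟨k, hk⟩ := (htop.eventually_gt_atTop _).exists
  exact (hbound k).not_gt hk

end Parabolic

section ConjEval

variable {p : ℂ[X]} {z : ℂ}

/-- The antiholomorphic map `z ↦ conj (p z)`, whose fixed points are to be counted. -/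
def conjEval (p : ℂ[X]) (z : ℂ) : ℂ := conj (p.eval z)

/-- The polynomial `p̄ ∘ p` whose evaluation is the second iterate of `conjEval p`. -/
noncomputable def conjEvalSq (p : ℂ[X]) : ℂ[X] := (p.map (starRingEnd ℂ)).comp p

lemma eval_map_conj (f : ℂ[X]) (z : ℂ) :
    (f.map (starRingEnd ℂ)).eval z = conj (f.eval (conj z)) := by
  simpa using eval_map_apply (p := f) (starRingEnd ℂ) (conj z)

lemma eval_conjEvalSq (p : ℂ[X]) (z : ℂ) :
    (conjEvalSq p).eval z = conjEval p (conjEval p z) := by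
  rw [conjEvalSq, eval_comp, eval_map_conj, conjEval, conjEval]

lemma eval_derivative_conjEvalSq (p : ℂ[X]) (z : ℂ) :
    (conjEvalSq p).derivative.eval z =
      p.derivative.eval z * conj (p.derivative.eval (conjEval p z)) := by
  rw [conjEvalSq, derivative_comp, eval_mul, eval_comp, derivative_map, eval_map_conj, conjEval]

lemma eval_derivative_conjEvalSq_of_isFixedPt (hz : conjEval p z = z) :
    (conjEvalSq p).derivative.eval z = ((‖p.derivative.eval z‖ ^ 2 : ℝ) : ℂ) := by
  rw [eval_derivative_conjEvalSq, hz, mul_conj, normSq_eq_norm_sq]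

lemma natDegree_conjEvalSq (p : ℂ[X]) : (conjEvalSq p).natDegree = p.natDegree ^ 2 := by
  rw [conjEvalSq, natDegree_comp, natDegree_map, sq]

lemma continuous_conjEval (p : ℂ[X]) : Continuous (conjEval p) :=
  continuous_conj.comp p.continuous

lemma commute_conjEval_conjEvalSq (p : ℂ[X]) :
    Function.Commute (conjEval p) ((conjEvalSq p).eval ·) := fun z => by
  simp only [eval_conjEvalSq]

lemma exists_critical_mem_basin_conjEvalSq (hp : 1 < p.natDegree) (hz : conjEval p z = z)
    (hnonrep : ‖p.derivative.eval z‖ ≤ 1) :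
    ∃ c ∈ basin ((conjEvalSq p).eval ·) z, p.derivative.eval c = 0 := by
  have hdeg : 1 < (conjEvalSq p).natDegree := by
    rw [natDegree_conjEvalSq]
    exact Nat.one_lt_pow two_ne_zero hp
  have hfix : (conjEvalSq p).eval z = z := by rw [eval_conjEvalSq, hz, hz]
  have hmul := eval_derivative_conjEvalSq_of_isFixedPt hz
  obtain ⟨c, hc, hcrit⟩ :
      ∃ c ∈ basin ((conjEvalSq p).eval ·) z, (conjEvalSq p).derivative.eval c = 0 := by
    rcases hnonrep.lt_or_eq with hlt | heq
    · refine exists_critical_mem_basin_of_attracting hdeg hfix ?_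
      rw [hmul, norm_real, Real.norm_of_nonneg (by positivity)]
      exact pow_lt_one₀ (norm_nonneg _) hlt two_ne_zero
    · exact exists_critical_mem_basin_of_parabolic hdeg hfix (by simp [hmul, heq])
  rw [eval_derivative_conjEvalSq, mul_eq_zero, map_eq_zero] at hcrit
  rcases hcrit with hcrit | hcrit
  · exact ⟨c, hc, hcrit⟩
  · refine ⟨conjEval p c, ?_, hcrit⟩
    simpa only [hz] using mem_basin_of_commute (continuous_conjEval p).continuousAt
      (commute_conjEval_conjEvalSq p) hc

lemma card_nonrepelling_le (hp : 1 < p.natDegree) {T : Finset ℂ}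
    (hT : ∀ z ∈ T, conjEval p z = z ∧ ‖p.derivative.eval z‖ ≤ 1) :
    T.card ≤ p.natDegree - 1 := by
  choose! c hbasin hcrit using fun z (hz : z ∈ T) =>
    exists_critical_mem_basin_conjEvalSq hp (hT z hz).1 (hT z hz).2
  have hp' : p.derivative ≠ 0 := derivative_eq_zero.not.mpr (by omega)
  calc T.card ≤ p.derivative.roots.toFinset.card := by
        refine Finset.card_le_card_of_injOn c (fun z hz => ?_) fun z hz w hw hzw => ?_
        · simpa [hp'] using hcrit z hz
        · exact tendsto_nhds_unique (hbasin z hz) (hzw ▸ hbasin w hw)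
    _ ≤ p.derivative.roots.card := Multiset.toFinset_card_le _
    _ ≤ p.derivative.natDegree := card_roots' _
    _ ≤ p.natDegree - 1 := natDegree_derivative_le p

end ConjEval

section Isotropic

variable {K V : Type*} [Field K] [AddCommGroup V] [Module K V] {τ : K →+* K} [RingHomSurjective τ]
  {B : V →ₛₗ[τ] V →ₗ[K] K} {E : Submodule K V} [FiniteDimensional K E]

lemma finrank_add_finrank_le_of_orthogonal (hB : ∀ x ∈ E, (∀ y ∈ E, B x y = 0) → x = 0)
    {I U : Submodule K V} (hI : I ≤ E) (hU : U ≤ E) (hIU : ∀ x ∈ I, ∀ y ∈ U, B x y = 0) :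
    Module.finrank K I + Module.finrank K U ≤ Module.finrank K E := by
  let U' := U.comap E.subtype
  let toDual : I →+ U'.dualAnnihilator :=
    { toFun := fun x => ⟨(B x) ∘ₗ E.subtype, (Submodule.mem_dualAnnihilator _).mpr
        fun y hy => hIU x x.2 y hy⟩
      map_zero' := by ext; simp
      map_add' := fun x y => by ext; simp }
  have hinj : Function.Injective toDual := by
    refine (injective_iff_map_eq_zero toDual).mpr fun x hx => Subtype.ext (hB x (hI x.2) ?_)
    exact fun y hy => LinearMap.congr_fun (Subtype.ext_iff.mp hx) ⟨y, hy⟩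
  have hrank : Module.finrank K I ≤ Module.finrank K U'.dualAnnihilator :=
    Module.finrank_le_finrank_of_rank_le_rank
      (lift_rank_le_of_surjective_injective τ toDual τ.surjective hinj
        fun r x => by ext; simp [toDual])
      (Module.rank_lt_aleph0 K _)
  have hU' : Module.finrank K U' = Module.finrank K U :=
    (Submodule.comapSubtypeEquivOfLe hU).finrank_eq
  have := Subspace.finrank_add_finrank_dualAnnihilator_eq U'
  omega

-- `W ⊓ N` is orthogonal to both `W` and `N`, hence to `W ⊔ N`.
lemma finrank_add_finrank_le_of_isotropic (hB : ∀ x ∈ E, (∀ y ∈ E, B x y = 0) → x = 0)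
    {W N : Submodule K V} (hW : W ≤ E) (hN : N ≤ E) (hWiso : ∀ x ∈ W, ∀ y ∈ W, B x y = 0)
    (hNdef : ∀ x ∈ N, B x x = 0 → ∀ y ∈ N, B x y = 0) :
    Module.finrank K W + Module.finrank K N ≤ Module.finrank K E := by
  have : FiniteDimensional K W := Submodule.finiteDimensional_of_le hW
  have : FiniteDimensional K N := Submodule.finiteDimensional_of_le hN
  rw [← Submodule.finrank_sup_add_finrank_inf_eq, add_comm]
  refine finrank_add_finrank_le_of_orthogonal hB (inf_le_left.trans hW) (sup_le hW hN) ?_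
  rintro x ⟨hxW, hxN⟩ y hy
  obtain ⟨u, hu, v, hv, rfl⟩ := Submodule.mem_sup.mp hy
  rw [map_add, hWiso x hxW u hu, hNdef x hxN (hWiso x hxW x hxW) v hv, add_zero]

end Isotropic

section Residues

variable {K : Type*} [Field K] {F : K[X]}

/-- The sum of the residues of `f / F` over all roots of `F`, computed as minus the residue at
infinity of the proper fraction `(f % F) / F`. -/
noncomputable def sumResidues (F : K[X]) : K[X] →ₗ[K] K where
  toFun f := (f % F).coeff (F.natDegree - 1) / F.leadingCoeff
  map_add' f g := by rw [add_mod, coeff_add, add_div]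
  map_smul' c f := by
    rw [smul_eq_C_mul, mod_def, mod_def, C_mul', smul_modByMonic, coeff_smul, smul_eq_mul,
      mul_div_assoc, RingHom.id_apply, smul_eq_mul]

lemma sumResidues_apply (F f : K[X]) :
    sumResidues F f = (f % F).coeff (F.natDegree - 1) / F.leadingCoeff := rfl

lemma sumResidues_eq_zero_of_dvd {f : K[X]} (h : F ∣ f) : sumResidues F f = 0 := by
  rw [sumResidues_apply, EuclideanDomain.mod_eq_zero.mpr h, coeff_zero, zero_div]

lemma sumResidues_eq_of_dvd_sub {f g : K[X]} (h : F ∣ f - g) :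
    sumResidues F f = sumResidues F g := by
  rw [← sub_eq_zero, ← map_sub, sumResidues_eq_zero_of_dvd h]

lemma sumResidues_of_degree_lt {f : K[X]} (h : f.degree < F.degree) :
    sumResidues F f = f.coeff (F.natDegree - 1) / F.leadingCoeff := by
  rw [sumResidues_apply, (mod_eq_self_iff (ne_zero_of_degree_gt h)).mpr h]

lemma sumResidues_eq_zero_of_natDegree_lt {f : K[X]} (h : f.natDegree + 1 < F.natDegree) :
    sumResidues F f = 0 := by
  rw [sumResidues_of_degree_lt (degree_lt_degree (by omega)),
    coeff_eq_zero_of_natDegree_lt (by omega), zero_div]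

lemma dvd_of_forall_sumResidues_mul_eq_zero (hF : F ≠ 0) {f : K[X]}
    (h : ∀ g ∈ degreeLT K F.natDegree, sumResidues F (g * f) = 0) : F ∣ f := by
  by_contra hndvd
  have hr : f % F ≠ 0 := EuclideanDomain.mod_eq_zero.not.mpr hndvd
  have hlt : (f % F).natDegree < F.natDegree := natDegree_lt_natDegree hr (degree_mod_lt f hF)
  obtain ⟨d, hd⟩ : ∃ d, F.natDegree - 1 = (f % F).natDegree + d :=
    ⟨F.natDegree - 1 - (f % F).natDegree, by omega⟩
  have hval := h (X ^ d) (mem_degreeLT.mpr (by rw [degree_X_pow]; exact_mod_cast (by omega)))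
  have hdvd : F ∣ X ^ d * f - X ^ d * (f % F) :=
    ⟨X ^ d * (f / F), by rw [EuclideanDomain.mod_eq_sub_mul_div]; ring⟩
  have hdeg : (X ^ d * (f % F)).degree < F.degree :=
    degree_lt_degree (by rw [natDegree_X_pow_mul _ hr]; omega)
  rw [sumResidues_eq_of_dvd_sub hdvd, sumResidues_of_degree_lt hdeg, hd, coeff_X_pow_mul,
    coeff_natDegree] at hval
  exact div_ne_zero (leadingCoeff_ne_zero.mpr hr) (leadingCoeff_ne_zero.mpr hF) hval

lemma sumResidues_div_X_sub_C (hF : F ≠ 0) {r : K} (hr : F.IsRoot r) :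
    sumResidues F (F / (X - C r)) = 1 := by
  have hfac := mul_div_eq_iff_isRoot.mpr hr
  set G := F / (X - C r)
  have hG : G ≠ 0 := right_ne_zero_of_mul (hfac ▸ hF)
  have hdeg : F.natDegree = G.natDegree + 1 := by
    rw [← hfac, natDegree_mul (X_sub_C_ne_zero r) hG, natDegree_X_sub_C, add_comm]
  have hlead : F.leadingCoeff = G.leadingCoeff := by
    rw [← hfac, leadingCoeff_mul, leadingCoeff_X_sub_C, one_mul]
  rw [sumResidues_of_degree_lt (degree_lt_degree (by omega)), hdeg, Nat.add_sub_cancel,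
    coeff_natDegree, hlead, div_self (leadingCoeff_ne_zero.mpr hG)]

lemma eval_div_X_sub_C_self {r : K} (hr : F.IsRoot r) :
    (F / (X - C r)).eval r = F.derivative.eval r := by
  conv_rhs => rw [← mul_div_eq_iff_isRoot.mpr hr]
  simp

lemma eval_div_X_sub_C_of_ne {r s : K} (hr : F.IsRoot r) (hs : F.IsRoot s) (hrs : s ≠ r) :
    (F / (X - C r)).eval s = 0 := by
  have h := congrArg (eval s) (mul_div_eq_iff_isRoot.mpr hr)
  rw [eval_mul, hs.eq_zero, eval_sub, eval_X, eval_C] at h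
  exact (mul_eq_zero.mp h).resolve_left (sub_ne_zero.mpr hrs)

lemma dvd_of_dvd_mul_prod_X_sub_C {S : Finset K} {f : K[X]}
    (hroot : ∀ r ∈ S, F.IsRoot r) (hsimple : ∀ r ∈ S, F.derivative.eval r ≠ 0)
    (hf : ∀ r ∈ S, f.eval r = 0) (hdvd : F ∣ f * ∏ r ∈ S, (X - C r)) : F ∣ f := by
  obtain ⟨k, hk⟩ := hdvd
  have hkroot (r : K) (hr : r ∈ S) : k.eval r = 0 := by
    have h := congrArg (fun g => eval r (derivative g)) hk
    have hprod : (∏ r ∈ S, (X - C r)).eval r = 0 := by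
      rw [eval_prod]
      exact Finset.prod_eq_zero hr (by simp)
    simp only [derivative_mul, eval_add, eval_mul, hf r hr, hprod, (hroot r hr).eq_zero, mul_zero,
      zero_mul, add_zero] at h
    exact (mul_eq_zero.mp h.symm).resolve_left (hsimple r hr)
  obtain ⟨l, rfl⟩ : ∏ r ∈ S, (X - C r) ∣ k :=
    Finset.prod_dvd_of_coprime (fun r _ s _ hrs => pairwise_coprime_X_sub_C
      Function.injective_id hrs) fun r hr => dvd_iff_isRoot.mpr (hkroot r hr)
  refine ⟨l, mul_right_cancel₀ (Finset.prod_ne_zero_iff.mpr fun r (_ : r ∈ S) =>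
    X_sub_C_ne_zero r) ?_⟩
  rw [hk, mul_assoc, mul_comm l]

lemma sumResidues_eq_sum_of_dvd (hF : F ≠ 0) {S : Finset K} {f : K[X]}
    (hroot : ∀ r ∈ S, F.IsRoot r) (hsimple : ∀ r ∈ S, F.derivative.eval r ≠ 0)
    (hdvd : F ∣ f * ∏ r ∈ S, (X - C r)) :
    sumResidues F f = ∑ r ∈ S, f.eval r / F.derivative.eval r := by
  set g := ∑ r ∈ S, (f.eval r / F.derivative.eval r) • (F / (X - C r)) with hg
  have hgeval (s : K) (hs : s ∈ S) : g.eval s = f.eval s := by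
    rw [hg, eval_finsetSum, Finset.sum_eq_single_of_mem s hs]
    · rw [eval_smul, eval_div_X_sub_C_self (hroot s hs), smul_eq_mul,
        div_mul_cancel₀ _ (hsimple s hs)]
    · intro r hr hrs
      rw [eval_smul, eval_div_X_sub_C_of_ne (hroot r hr) (hroot s hs) hrs.symm, smul_zero]
  have hgdvd : F ∣ g * ∏ r ∈ S, (X - C r) := by
    rw [hg, Finset.sum_mul]
    refine Finset.dvd_sum fun r hr => ?_
    rw [smul_eq_C_mul, mul_assoc]
    refine dvd_mul_of_dvd_right ?_ _
    conv_lhs => rw [← mul_div_eq_iff_isRoot.mpr (hroot r hr), mul_comm]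
    exact mul_dvd_mul_left _ (Finset.dvd_prod_of_mem _ hr)
  have hF_dvd : F ∣ f - g := by
    refine dvd_of_dvd_mul_prod_X_sub_C hroot hsimple (fun r hr => ?_) ?_
    · rw [eval_sub, hgeval r hr, sub_self]
    · rw [sub_mul]
      exact dvd_sub hdvd hgdvd
  rw [sumResidues_eq_of_dvd_sub hF_dvd, hg, map_sum]
  refine Finset.sum_congr rfl fun r hr => ?_
  rw [map_smul, sumResidues_div_X_sub_C hF (hroot r hr), smul_eq_mul, mul_one]

end Residues

section CompSubX

variable {K : Type*} [Field K] {p q : K[X]}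

lemma natDegree_comp_sub_X (h : 1 < q.natDegree * p.natDegree) :
    (q.comp p - X).natDegree = q.natDegree * p.natDegree := by
  rw [natDegree_sub_eq_left_of_natDegree_lt (by rwa [natDegree_comp, natDegree_X]),
    natDegree_comp]

lemma comp_sub_X_dvd_comp_sub (q f : K[X]) : q - X ∣ f.comp q - f := by
  have h := sub_dvd_eval_sub q X (f.map C)
  rwa [← eval₂_eq_eval_map, ← eval₂_eq_eval_map, ← comp, ← comp, comp_X] at h

lemma natDegree_div_add_natDegree {g q : K[X]} (hq : q ≠ 0) (h : q.natDegree ≤ g.natDegree) :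
    (g / q).natDegree + q.natDegree = g.natDegree := by
  rw [div_def, natDegree_C_mul (inv_ne_zero (leadingCoeff_ne_zero.mpr hq)),
    natDegree_divByMonic _ (monic_mul_leadingCoeff_inv hq), natDegree_mul_leadingCoeff_inv _ hq,
    Nat.sub_add_cancel h]

lemma sumResidues_X_pow_mul_comp_of_natDegree_lt (h : 1 < q.natDegree * p.natDegree)
    {a : ℕ} {g : K[X]} (hg : g.natDegree < q.natDegree)
    (ha : a + g.natDegree + 2 < p.natDegree + q.natDegree) :
    sumResidues (q.comp p - X) (X ^ a * g.comp p) = 0 := by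
  refine sumResidues_eq_zero_of_natDegree_lt ?_
  have hle : (X ^ a * g.comp p).natDegree ≤ a + g.natDegree * p.natDegree := by
    simpa [natDegree_comp] using natDegree_mul_le (p := X ^ a) (q := g.comp p)
  have hp : 0 < p.natDegree := Nat.pos_of_ne_zero (right_ne_zero_of_mul h.ne_bot)
  rw [natDegree_comp_sub_X h]
  nlinarith

-- The affine Euler–Jacobi vanishing theorem for the system `y = p x`, `x = q y`.
lemma sumResidues_X_pow_mul_comp (h : 1 < q.natDegree * p.natDegree) {a : ℕ} {g : K[X]}
    (ha : a + g.natDegree + 2 < p.natDegree + q.natDegree) :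
    sumResidues (q.comp p - X) (X ^ a * g.comp p) = 0 := by
  induction hd : g.natDegree using Nat.strong_induction_on generalizing a g with
  | _ d ih =>
    rcases lt_or_ge g.natDegree q.natDegree with hlt | hge
    · exact sumResidues_X_pow_mul_comp_of_natDegree_lt h hlt ha
    have hq : q.natDegree ≠ 0 := left_ne_zero_of_mul h.ne_bot
    have hdiv := natDegree_div_add_natDegree (ne_zero_of_natDegree_gt (Nat.pos_of_ne_zero hq)) hge
    have hmod : (g % q).natDegree < q.natDegree := natDegree_mod_lt g hq
    have hdvd : q.comp p - X ∣ X ^ a * g.comp p -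
        (X ^ (a + 1) * (g / q).comp p + X ^ a * (g % q).comp p) := by
      refine ⟨X ^ a * (g / q).comp p, ?_⟩
      nth_rewrite 1 [← EuclideanDomain.div_add_mod g q]
      rw [add_comp, mul_comp]
      ring
    rw [sumResidues_eq_of_dvd_sub hdvd, map_add,
      ih _ (by omega) (by omega) rfl, ih _ (by omega) (by omega) rfl, add_zero]

end CompSubX

section MonomialSpan

open Finset (HasAntidiagonal)

variable {K : Type*} [Field K]

lemma linearIndepOn_X_pow_mul_pow (p : K[X]) :
    LinearIndepOn K (fun ab : ℕ × ℕ => X ^ ab.1 * p ^ ab.2) {ab | ab.1 < p.natDegree} := by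
  rcases p.natDegree.eq_zero_or_pos with hzero | hpos
  · simp [hzero]
  let seq : Polynomial.Sequence K :=
    { elems' := fun d => X ^ (d % p.natDegree) * p ^ (d / p.natDegree)
      degree_eq' := fun d => by
        rw [degree_mul, degree_X_pow, degree_pow,
          degree_eq_natDegree (ne_zero_of_natDegree_gt hpos), nsmul_eq_mul]
        exact_mod_cast Nat.mod_add_div' d p.natDegree }
  have hseq (ab : {ab : ℕ × ℕ | ab.1 < p.natDegree}) :
      seq (ab.1.1 + p.natDegree * ab.1.2) = X ^ ab.1.1 * p ^ ab.1.2 := by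
    change X ^ _ * p ^ _ = _
    rw [Nat.add_mul_mod_self_left, Nat.mod_eq_of_lt ab.2, Nat.add_mul_div_left _ _ hpos,
      Nat.div_eq_of_lt ab.2, zero_add]
  have hinj : Function.Injective fun ab : {ab : ℕ × ℕ | ab.1 < p.natDegree} =>
      ab.1.1 + p.natDegree * ab.1.2 := by
    rintro ⟨⟨a, b⟩, hab⟩ ⟨⟨a', b'⟩, hab'⟩ h
    have hmod := congrArg (· % p.natDegree) h
    have hdiv := congrArg (· / p.natDegree) h
    simp only [Nat.add_mul_mod_self_left, Nat.mod_eq_of_lt hab, Nat.mod_eq_of_lt hab',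
      Nat.add_mul_div_left _ _ hpos, Nat.div_eq_of_lt hab, Nat.div_eq_of_lt hab', zero_add]
      at hmod hdiv
    exact Subtype.ext (Prod.ext hmod hdiv)
  have hcomp := seq.linearIndependent.comp _ hinj
  rwa [show seq ∘ _ = _ from funext hseq] at hcomp

/-- The span of the monomials `x ^ a * y ^ b` of degree at most `deg p - 2`, restricted to the curve
`y = p x`. -/
noncomputable def monomialSpan (p : K[X]) : Submodule K K[X] :=
  Submodule.span K
    ((fun ab : ℕ × ℕ => X ^ ab.1 * p ^ ab.2) '' {ab | ab.1 + ab.2 + 1 < p.natDegree})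

lemma monomialSpan_le_degreeLT (p : K[X]) : monomialSpan p ≤ degreeLT K (p.natDegree ^ 2) := by
  refine Submodule.span_le.mpr ?_
  rintro _ ⟨⟨a, b⟩, hab : a + b + 1 < p.natDegree, rfl⟩
  have hdeg : (X ^ a * p ^ b).natDegree ≤ a + b * p.natDegree := by
    simpa using natDegree_mul_le (p := X ^ a) (q := p ^ b)
  have hlt : a + b * p.natDegree < p.natDegree ^ 2 := by nlinarith
  exact mem_degreeLT.mpr (degree_le_natDegree.trans_lt (by exact_mod_cast hdeg.trans_lt hlt))

lemma two_mul_card_biUnion_antidiagonal (n : ℕ) :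
    2 * ((Finset.range (n - 1)).biUnion HasAntidiagonal.antidiagonal).card =
      n * (n - 1) := by
  rw [Finset.card_biUnion fun i _ j _ hij => Finset.disjoint_left.mpr fun ab hi hj => hij <|
    (HasAntidiagonal.mem_antidiagonal.mp hi).symm.trans (HasAntidiagonal.mem_antidiagonal.mp hj)]
  rcases n with _ | n
  · rfl
  · simpa [Finset.sum_range_succ', mul_comm] using Finset.sum_range_id_mul_two (n + 1)

lemma two_mul_finrank_monomialSpan (p : K[X]) :
    2 * Module.finrank K (monomialSpan p) = p.natDegree * (p.natDegree - 1) := by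
  have hindep : LinearIndepOn K (fun ab : ℕ × ℕ => X ^ ab.1 * p ^ ab.2)
      {ab | ab.1 + ab.2 + 1 < p.natDegree} :=
    (linearIndepOn_X_pow_mul_pow p).mono fun ab (hab : ab.1 + ab.2 + 1 < _) =>
      show ab.1 < _ by omega
  have hset : {ab : ℕ × ℕ | ab.1 + ab.2 + 1 < p.natDegree} =
      (Finset.range (p.natDegree - 1)).biUnion HasAntidiagonal.antidiagonal := by
    ext ab
    simp [Nat.lt_sub_iff_add_lt]
  rw [← two_mul_card_biUnion_antidiagonal, monomialSpan]
  rw [hset] at hindep ⊢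
  rw [Set.image_eq_range, finrank_span_eq_card hindep]
  simp only [Finset.coe_sort_coe, Fintype.card_coe]

end MonomialSpan

section ResidueForm

variable {p : ℂ[X]} {z : ℂ}

/-- The conjugate-linear ring homomorphism `f ↦ f̄ ∘ p`, which sends `f` to the holomorphic
polynomial `z ↦ conj (f (conjEval p z))`. -/
noncomputable def conjComp (p : ℂ[X]) : ℂ[X] →+* ℂ[X] :=
  (compRingHom p).comp (mapRingHom (starRingEnd ℂ))

lemma conjComp_apply (p f : ℂ[X]) : conjComp p f = (f.map (starRingEnd ℂ)).comp p := rfl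

lemma eval_conjComp (p f : ℂ[X]) (z : ℂ) :
    (conjComp p f).eval z = conj (f.eval (conjEval p z)) := by
  rw [conjComp_apply, eval_comp, eval_map_conj, conjEval]

lemma conjComp_smul (p : ℂ[X]) (c : ℂ) (f : ℂ[X]) : conjComp p (c • f) = conj c • conjComp p f := by
  rw [conjComp_apply, conjComp_apply, Polynomial.map_smul, smul_comp]

lemma conjComp_X (p : ℂ[X]) : conjComp p X = p := by
  rw [conjComp_apply, map_X, X_comp]

lemma conjComp_conjComp (p f : ℂ[X]) : conjComp p (conjComp p f) = f.comp (conjEvalSq p) := by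
  have hconj : (starRingEnd ℂ).comp (starRingEnd ℂ) = RingHom.id ℂ := RingHom.ext conj_conj
  rw [conjComp_apply, conjComp_apply, map_comp, Polynomial.map_map, hconj, Polynomial.map_id,
    comp_assoc, conjEvalSq]

lemma conjComp_ne_zero (hp : 0 < p.natDegree) {f : ℂ[X]} (hf : f ≠ 0) : conjComp p f ≠ 0 := by
  rw [conjComp_apply, Ne, comp_eq_zero_iff, Polynomial.map_eq_zero]
  rintro (h | ⟨-, h⟩)
  · exact hf h
  · exact hp.ne' (h ▸ natDegree_C _)

/-- The polynomial whose roots are the points of period dividing two of `conjEval p`. -/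
noncomputable def periodTwoPoly (p : ℂ[X]) : ℂ[X] := conjEvalSq p - X

lemma natDegree_periodTwoPoly (hp : 1 < p.natDegree) :
    (periodTwoPoly p).natDegree = p.natDegree ^ 2 := by
  rw [periodTwoPoly, conjEvalSq, natDegree_comp_sub_X, natDegree_map, sq]
  rw [natDegree_map]
  nlinarith

lemma periodTwoPoly_ne_zero (hp : 1 < p.natDegree) : periodTwoPoly p ≠ 0 :=
  ne_zero_of_natDegree_gt (n := 0) (by rw [natDegree_periodTwoPoly hp]; positivity)

lemma isRoot_periodTwoPoly : (periodTwoPoly p).IsRoot z ↔ conjEval p (conjEval p z) = z := by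
  rw [IsRoot.def, periodTwoPoly, eval_sub, eval_conjEvalSq, eval_X, sub_eq_zero]

lemma isRoot_periodTwoPoly_of_isFixedPt (hz : conjEval p z = z) : (periodTwoPoly p).IsRoot z :=
  isRoot_periodTwoPoly.mpr (by rw [hz, hz])

lemma eval_derivative_periodTwoPoly (p : ℂ[X]) (z : ℂ) : (periodTwoPoly p).derivative.eval z =
    p.derivative.eval z * conj (p.derivative.eval (conjEval p z)) - 1 := by
  rw [periodTwoPoly, derivative_sub, derivative_X, eval_sub, eval_derivative_conjEvalSq, eval_one]

lemma eval_derivative_periodTwoPoly_of_isFixedPt (hz : conjEval p z = z) :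
    (periodTwoPoly p).derivative.eval z = ((‖p.derivative.eval z‖ ^ 2 - 1 : ℝ) : ℂ) := by
  rw [eval_derivative_periodTwoPoly, hz, mul_conj, normSq_eq_norm_sq, ofReal_sub, ofReal_one]

lemma periodTwoPoly_dvd_conjComp_conjComp_sub (p f : ℂ[X]) :
    periodTwoPoly p ∣ conjComp p (conjComp p f) - f := by
  rw [conjComp_conjComp]
  exact comp_sub_X_dvd_comp_sub _ _

lemma periodTwoPoly_dvd_conjComp_self (p : ℂ[X]) :
    periodTwoPoly p ∣ conjComp p (periodTwoPoly p) := by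
  have h := periodTwoPoly_dvd_conjComp_conjComp_sub p (conjComp p X)
  rwa [← map_sub, conjComp_conjComp, X_comp] at h

/-- The Hermitian form `∑ g(z) conj (f (conjEval p z)) / F'(z)` over the roots `z` of
`F = periodTwoPoly p`, with the sum read as a sum of residues when `F` has multiple roots. -/
noncomputable def residueForm (p : ℂ[X]) : ℂ[X] →ₛₗ[starRingEnd ℂ] ℂ[X] →ₗ[ℂ] ℂ :=
  LinearMap.mk₂'ₛₗ (starRingEnd ℂ) (RingHom.id ℂ)
    (fun f g => sumResidues (periodTwoPoly p) (g * conjComp p f))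
    (fun f₁ f₂ g => by rw [map_add, mul_add, map_add])
    (fun c f g => by rw [conjComp_smul, mul_smul_comm, map_smul])
    (fun f g₁ g₂ => by rw [add_mul, map_add])
    (fun c f g => by rw [smul_mul_assoc, map_smul, RingHom.id_apply])

lemma residueForm_apply (p f g : ℂ[X]) :
    residueForm p f g = sumResidues (periodTwoPoly p) (g * conjComp p f) := rfl

lemma eq_zero_of_residueForm_eq_zero (hp : 1 < p.natDegree) {f : ℂ[X]}
    (hf : f ∈ degreeLT ℂ (p.natDegree ^ 2))
    (h : ∀ g ∈ degreeLT ℂ (p.natDegree ^ 2), residueForm p f g = 0) : f = 0 := by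
  have hdeg := natDegree_periodTwoPoly hp
  have hdvd : periodTwoPoly p ∣ conjComp p f :=
    dvd_of_forall_sumResidues_mul_eq_zero (periodTwoPoly_ne_zero hp) fun g hg => h g (hdeg ▸ hg)
  have hdvd' : periodTwoPoly p ∣ conjComp p (conjComp p f) :=
    (periodTwoPoly_dvd_conjComp_self p).trans (map_dvd (conjComp p) hdvd)
  refine eq_zero_of_dvd_of_degree_lt
    ((dvd_sub_right hdvd').mp (periodTwoPoly_dvd_conjComp_conjComp_sub p f)) ?_
  rw [degree_eq_natDegree (periodTwoPoly_ne_zero hp), hdeg]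
  exact mem_degreeLT.mp hf

lemma residueForm_X_pow_mul_pow (hp : 1 < p.natDegree) {a b c d : ℕ}
    (hab : a + b + 1 < p.natDegree) (hcd : c + d + 1 < p.natDegree) :
    residueForm p (X ^ a * p ^ b) (X ^ c * p ^ d) = 0 := by
  have hσ : conjComp p (X ^ a * p ^ b) = p ^ a * conjEvalSq p ^ b := by
    rw [map_mul, map_pow, map_pow, conjComp_X, conjComp_apply, conjEvalSq]
  have hdvd : periodTwoPoly p ∣ X ^ c * p ^ d * conjComp p (X ^ a * p ^ b) -
      X ^ (c + b) * (X ^ (d + a) : ℂ[X]).comp p := by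
    have hfactor : X ^ c * p ^ d * (p ^ a * conjEvalSq p ^ b) - X ^ (c + b) * p ^ (d + a) =
        X ^ c * p ^ (d + a) * (conjEvalSq p ^ b - X ^ b) := by ring
    rw [hσ, X_pow_comp, hfactor]
    exact dvd_mul_of_dvd_right (sub_dvd_pow_sub_pow _ _ _) _
  rw [residueForm_apply, sumResidues_eq_of_dvd_sub hdvd]
  refine sumResidues_X_pow_mul_comp ?_ ?_
  · rw [natDegree_map]
    nlinarith
  · rw [natDegree_map, natDegree_X_pow]
    omega

lemma residueForm_monomialSpan (hp : 1 < p.natDegree) {f g : ℂ[X]} (hf : f ∈ monomialSpan p)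
    (hg : g ∈ monomialSpan p) : residueForm p f g = 0 := by
  induction hf, hg using Submodule.span_induction₂ with
  | mem_mem f g hf hg =>
    obtain ⟨ab, hab, rfl⟩ := hf
    obtain ⟨cd, hcd, rfl⟩ := hg
    exact residueForm_X_pow_mul_pow hp hab hcd
  | zero_left g _ => rw [map_zero, LinearMap.zero_apply]
  | zero_right f _ => rw [map_zero]
  | add_left f₁ f₂ g _ _ _ h₁ h₂ => rw [map_add, LinearMap.add_apply, h₁, h₂, add_zero]
  | add_right f g₁ g₂ _ _ _ h₁ h₂ => rw [map_add, h₁, h₂, add_zero]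
  | smul_left c f g _ _ h => rw [LinearMap.map_smulₛₗ, LinearMap.smul_apply, h, smul_zero]
  | smul_right c f g _ _ h => rw [map_smul, h, smul_zero]

end ResidueForm

section Multiplicity

lemma rootMultiplicity_comp {K : Type*} [Field K] {f g : K[X]} {a : K}
    (hg : g.derivative.eval a ≠ 0) :
    (f.comp g).rootMultiplicity a = f.rootMultiplicity (g.eval a) := by
  rcases eq_or_ne f 0 with rfl | hf
  · simp
  obtain ⟨u, hu, hndvd⟩ := exists_eq_pow_rootMultiplicity_mul_and_not_dvd f hf (g.eval a)
  set m := f.rootMultiplicity (g.eval a)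
  have hroot : (g - C (g.eval a)).IsRoot a := by simp
  have hfac := mul_div_eq_iff_isRoot.mpr hroot
  have hv := eval_div_X_sub_C_self hroot
  set v := (g - C (g.eval a)) / (X - C a)
  have hcofactor : (v ^ m * u.comp g).eval a ≠ 0 := by
    rw [eval_mul, eval_pow, hv, eval_comp]
    refine mul_ne_zero (pow_ne_zero _ (by simpa using hg)) ?_
    rwa [dvd_iff_isRoot] at hndvd
  have hcomp : f.comp g = v ^ m * u.comp g * (X - C a) ^ m := by
    rw [hu, mul_comp, pow_comp, sub_comp, X_comp, C_comp, ← hfac, mul_pow]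
    ring
  rw [hcomp, rootMultiplicity_mul_X_sub_C_pow (fun h => hcofactor (by rw [h, eval_zero])),
    rootMultiplicity_eq_zero hcofactor, zero_add]

lemma rootMultiplicity_eq_one {K : Type*} [Field K] {F : K[X]} {z : K} (hroot : F.IsRoot z)
    (hz : F.derivative.eval z ≠ 0) : F.rootMultiplicity z = 1 := by
  have hF : F ≠ 0 := by
    rintro rfl
    simp at hz
  have hpos := (rootMultiplicity_pos hF).mpr hroot
  have hle := (one_lt_rootMultiplicity_iff_isRoot hF).not.mpr fun h => hz h.2
  omega

variable {p : ℂ[X]} {z : ℂ}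

lemma rootMultiplicity_map_conj (f : ℂ[X]) (z : ℂ) :
    (f.map (starRingEnd ℂ)).rootMultiplicity z = f.rootMultiplicity (conj z) := by
  simpa using (eq_rootMultiplicity_map (p := f) (starRingEnd ℂ).injective (conj z)).symm

lemma rootMultiplicity_conjComp {f : ℂ[X]} (hz : p.derivative.eval z ≠ 0) :
    (conjComp p f).rootMultiplicity z = f.rootMultiplicity (conjEval p z) := by
  rw [conjComp_apply, rootMultiplicity_comp hz, rootMultiplicity_map_conj, conjEval]

lemma rootMultiplicity_periodTwoPoly_le (hp : 1 < p.natDegree)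
    (hz : conjEval p (conjEval p z) = z) :
    (periodTwoPoly p).rootMultiplicity z ≤ (periodTwoPoly p).rootMultiplicity (conjEval p z) := by
  rcases eq_or_ne (p.derivative.eval z) 0 with hcrit | hcrit
  · have hsimple : (periodTwoPoly p).derivative.eval z ≠ 0 := by
      simp [eval_derivative_periodTwoPoly, hcrit]
    rw [rootMultiplicity_eq_one (isRoot_periodTwoPoly.mpr hz) hsimple, Nat.one_le_iff_ne_zero,
      ← Nat.pos_iff_ne_zero, rootMultiplicity_pos (periodTwoPoly_ne_zero hp), isRoot_periodTwoPoly,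
      hz]
  · rw [← rootMultiplicity_conjComp hcrit]
    exact rootMultiplicity_le_rootMultiplicity_of_dvd
      (conjComp_ne_zero (by omega) (periodTwoPoly_ne_zero hp))
      (periodTwoPoly_dvd_conjComp_self p) z

lemma rootMultiplicity_periodTwoPoly_conjEval (hp : 1 < p.natDegree)
    (hz : conjEval p (conjEval p z) = z) :
    (periodTwoPoly p).rootMultiplicity (conjEval p z) = (periodTwoPoly p).rootMultiplicity z := by
  refine le_antisymm ?_ (rootMultiplicity_periodTwoPoly_le hp hz)
  simpa only [hz] using rootMultiplicity_periodTwoPoly_le (z := conjEval p z) hp (by rw [hz])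

end Multiplicity

section HalfDivisor

open scoped Classical in
-- Fixed points outside `S` contribute `⌈m / 2⌉` each, two-cycles put their multiplicity on one of
-- their two points.
lemma exists_halving {α : Type*} {R S : Finset α} {s : α → α} {m : α → ℕ}
    (hmaps : ∀ z ∈ R, s z ∈ R) (hinv : ∀ z ∈ R, s (s z) = z) (hm : ∀ z ∈ R, m (s z) = m z)
    (hSR : S ⊆ R) (hSfix : ∀ z ∈ S, s z = z) (hSm : ∀ z ∈ S, m z = 1) :
    ∃ e : α → ℕ, (∀ z ∈ R, z ∉ S → m z ≤ e z + e (s z)) ∧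
      2 * ∑ z ∈ R, e z + S.card ≤ ∑ z ∈ R, m z + (R.filter fun z => s z = z ∧ z ∉ S).card := by
  let e (z : α) : ℕ :=
    if s z = z then if z ∈ S then 0 else (m z + 1) / 2
    else if WellOrderingRel z (s z) then m z else 0
  have hcycle (z : α) (hz : z ∈ R) (hne : s z ≠ z) : e z + e (s z) = m z := by
    simp only [e, hinv z hz, hm z hz, hne, hne.symm, if_false]
    rcases trichotomous_of WellOrderingRel z (s z) with hlt | heq | hgt
    · simp [hlt, asymm hlt]
    · exact absurd heq.symm hne
    · simp [hgt, asymm hgt]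
  refine ⟨e, fun z hz hzS => ?_, ?_⟩
  · by_cases hfix : s z = z
    · simp only [e, hfix, hzS, if_true, if_false]
      omega
    · exact (hcycle z hz hfix).ge
  have hsum : ∑ z ∈ R, e (s z) = ∑ z ∈ R, e z :=
    Finset.sum_bij' (fun z _ => s z) (fun z _ => s z) hmaps hmaps hinv hinv fun _ _ => rfl
  have hpoint (z : α) (hz : z ∈ R) : e z + e (s z) + (if z ∈ S then 1 else 0) ≤
      m z + if s z = z ∧ z ∉ S then 1 else 0 := by
    by_cases hzS : z ∈ S
    · simp [e, hzS, hSfix z hzS, hSm z hzS]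
    by_cases hfix : s z = z
    · simp only [e, hfix, hzS, if_true, if_false, not_false_eq_true, and_self]
      omega
    · simp [hzS, hfix, hcycle z hz hfix]
  have htotal := Finset.sum_le_sum hpoint
  rw [Finset.sum_add_distrib, Finset.sum_add_distrib, Finset.sum_add_distrib, hsum,
    Finset.sum_boole, Finset.sum_boole, Finset.filter_mem_eq_inter,
    Finset.inter_eq_right.mpr hSR] at htotal
  simpa [two_mul] using htotal

lemma dvd_of_forall_pow_rootMultiplicity_dvd {K : Type*} [Field K] [IsAlgClosed K] {F G : K[X]}
    (hF : F ≠ 0) (h : ∀ z, F.IsRoot z → (X - C z) ^ F.rootMultiplicity z ∣ G) : F ∣ G := by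
  classical
  rcases eq_or_ne G 0 with rfl | hG
  · exact dvd_zero F
  rw [IsAlgClosed.dvd_iff_roots_le_roots hF hG, Multiset.le_iff_count]
  intro z
  rw [count_roots, count_roots]
  by_cases hz : F.IsRoot z
  · exact (le_rootMultiplicity_iff hG).mpr (h z hz)
  · rw [rootMultiplicity_eq_zero hz]
    exact Nat.zero_le _

variable {p : ℂ[X]} {z : ℂ}

lemma X_sub_C_dvd_conjComp (p : ℂ[X]) (z : ℂ) :
    X - C z ∣ conjComp p (X - C (conjEval p z)) := by
  rw [dvd_iff_isRoot, IsRoot.def, eval_conjComp]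
  simp

/-- A repelling fixed point of `conjEval p`: the real derivative of `conjEval p` expands by the
factor `‖p' z‖ > 1` in every direction. -/
def IsRepelling (p : ℂ[X]) (z : ℂ) : Prop := conjEval p z = z ∧ 1 < ‖p.derivative.eval z‖

lemma IsRepelling.eval_derivative_periodTwoPoly_ne_zero (hz : IsRepelling p z) :
    (periodTwoPoly p).derivative.eval z ≠ 0 := by
  rw [eval_derivative_periodTwoPoly_of_isFixedPt hz.1, ofReal_ne_zero]
  nlinarith [hz.2]

lemma IsRepelling.rootMultiplicity_periodTwoPoly (hz : IsRepelling p z) :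
    (periodTwoPoly p).rootMultiplicity z = 1 :=
  rootMultiplicity_eq_one (isRoot_periodTwoPoly_of_isFixedPt hz.1)
    hz.eval_derivative_periodTwoPoly_ne_zero

lemma periodTwoPoly_dvd_prod {R S : Finset ℂ} {e : ℂ → ℕ} (hp : 1 < p.natDegree)
    (hR : ∀ z, z ∈ R ↔ conjEval p (conjEval p z) = z) (hS : ∀ z ∈ S, IsRepelling p z)
    (he : ∀ z ∈ R, z ∉ S → (periodTwoPoly p).rootMultiplicity z ≤ e z + e (conjEval p z)) :
    periodTwoPoly p ∣ (∏ z ∈ R, (X - C z) ^ e z) * conjComp p (∏ z ∈ R, (X - C z) ^ e z) *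
      ∏ r ∈ S, (X - C r) := by
  refine dvd_of_forall_pow_rootMultiplicity_dvd (periodTwoPoly_ne_zero hp) fun z hz => ?_
  have hzR : z ∈ R := (hR z).mpr (isRoot_periodTwoPoly.mp hz)
  by_cases hzS : z ∈ S
  · rw [(hS z hzS).rootMultiplicity_periodTwoPoly, pow_one]
    exact dvd_mul_of_dvd_right (Finset.dvd_prod_of_mem _ hzS) _
  have hconj : (X - C z) ^ e (conjEval p z) ∣ conjComp p (∏ z ∈ R, (X - C z) ^ e z) := by
    refine (pow_dvd_pow_of_dvd (X_sub_C_dvd_conjComp p z) _).trans ?_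
    rw [← map_pow]
    exact map_dvd (conjComp p) (Finset.dvd_prod_of_mem (fun z => (X - C z) ^ e z)
      ((hR _).mpr (by rw [(hR z).mp hzR])))
  refine dvd_mul_of_dvd_left ((pow_dvd_pow _ (he z hzR hzS)).trans ?_) _
  rw [pow_add]
  exact mul_dvd_mul (Finset.dvd_prod_of_mem _ hzR) hconj

lemma exists_periodTwoPoly_dvd (hp : 1 < p.natDegree) {S T : Finset ℂ}
    (hS : ∀ z ∈ S, IsRepelling p z) (hT : ∀ z, conjEval p z = z → z ∉ S → z ∈ T) :
    ∃ D : ℂ[X], D ≠ 0 ∧ 2 * D.natDegree + S.card ≤ p.natDegree ^ 2 + T.card ∧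
      periodTwoPoly p ∣ D * conjComp p D * ∏ r ∈ S, (X - C r) := by
  classical
  let R := (periodTwoPoly p).roots.toFinset
  have hR (z : ℂ) : z ∈ R ↔ conjEval p (conjEval p z) = z := by
    rw [Multiset.mem_toFinset, mem_roots (periodTwoPoly_ne_zero hp), isRoot_periodTwoPoly]
  obtain ⟨e, he, hcard⟩ := exists_halving (R := R) (S := S) (s := conjEval p)
    (m := fun z => (periodTwoPoly p).rootMultiplicity z)
    (fun z hz => (hR _).mpr (by rw [(hR z).mp hz])) (fun z => (hR z).mp)
    (fun z hz => rootMultiplicity_periodTwoPoly_conjEval hp ((hR z).mp hz))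
    (fun z hz => (hR z).mpr (by rw [(hS z hz).1, (hS z hz).1])) (fun z hz => (hS z hz).1)
    (fun z hz => (hS z hz).rootMultiplicity_periodTwoPoly)
  have hmult : ∑ z ∈ R, (periodTwoPoly p).rootMultiplicity z ≤ p.natDegree ^ 2 := by
    simp only [← count_roots, ← natDegree_periodTwoPoly hp]
    exact (Multiset.toFinset_sum_count_eq _).trans_le (card_roots' _)
  have hfix : (R.filter fun z => conjEval p z = z ∧ z ∉ S).card ≤ T.card :=
    Finset.card_le_card fun z hz => hT z (Finset.mem_filter.mp hz).2.1 (Finset.mem_filter.mp hz).2.2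
  have hmonic : ∀ z ∈ R, ((X - C z) ^ e z).Monic := fun z _ => (monic_X_sub_C z).pow _
  have hdeg : (∏ z ∈ R, (X - C z) ^ e z).natDegree = ∑ z ∈ R, e z := by
    rw [natDegree_prod_of_monic _ _ hmonic]
    simp
  exact ⟨∏ z ∈ R, (X - C z) ^ e z, (monic_prod_of_monic _ _ hmonic).ne_zero, by omega,
    periodTwoPoly_dvd_prod hp hR hS he⟩

end HalfDivisor

section Repelling

variable {p : ℂ[X]} {S : Finset ℂ}

lemma residueForm_eq_sum (hp : 1 < p.natDegree)
    (hS : ∀ z ∈ S, IsRepelling p z) {x y : ℂ[X]}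
    (hdvd : periodTwoPoly p ∣ y * conjComp p x * ∏ r ∈ S, (X - C r)) :
    residueForm p x y =
      ∑ r ∈ S, y.eval r * conj (x.eval r) / ((‖p.derivative.eval r‖ ^ 2 - 1 : ℝ) : ℂ) := by
  rw [residueForm_apply, sumResidues_eq_sum_of_dvd (periodTwoPoly_ne_zero hp)
    (fun r hr => isRoot_periodTwoPoly_of_isFixedPt (hS r hr).1)
    (fun r hr => (hS r hr).eval_derivative_periodTwoPoly_ne_zero) hdvd]
  refine Finset.sum_congr rfl fun r hr => ?_
  rw [eval_mul, eval_conjComp, (hS r hr).1,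
    eval_derivative_periodTwoPoly_of_isFixedPt (hS r hr).1]

lemma eval_eq_zero_of_residueForm_self_eq_zero (hp : 1 < p.natDegree)
    (hS : ∀ z ∈ S, IsRepelling p z) {x : ℂ[X]}
    (hdvd : periodTwoPoly p ∣ x * conjComp p x * ∏ r ∈ S, (X - C r))
    (hx : residueForm p x x = 0) {r : ℂ} (hr : r ∈ S) : x.eval r = 0 := by
  have hpos (r : ℂ) (hr : r ∈ S) : 0 < ‖p.derivative.eval r‖ ^ 2 - 1 := by nlinarith [(hS r hr).2]
  have hsum : ∑ r ∈ S, ‖x.eval r‖ ^ 2 / (‖p.derivative.eval r‖ ^ 2 - 1) = 0 := by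
    rw [residueForm_eq_sum hp hS hdvd] at hx
    simp only [mul_conj, normSq_eq_norm_sq] at hx
    exact_mod_cast hx
  have hterm := (Finset.sum_eq_zero_iff_of_nonneg fun r hr =>
    div_nonneg (sq_nonneg _) (hpos r hr).le).mp hsum r hr
  simpa [(hpos r hr).ne'] using hterm

lemma finrank_degreeLT (K : Type*) [Field K] (k : ℕ) : Module.finrank K (degreeLT K k) = k := by
  rw [(degreeLTEquiv K k).finrank_eq, Module.finrank_fin_fun]

lemma finrank_map_mulLeft_degreeLT {K : Type*} [Field K] {D : K[X]} (hD : D ≠ 0) (k : ℕ) :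
    Module.finrank K ((degreeLT K k).map (LinearMap.mulLeft K D)) = k := by
  rw [← (Submodule.equivMapOfInjective _ (mul_right_injective₀ hD) _).finrank_eq,
    finrank_degreeLT]

lemma map_mulLeft_degreeLT_le {K : Type*} [Field K] (D : K[X]) (k : ℕ) :
    (degreeLT K (k - D.natDegree)).map (LinearMap.mulLeft K D) ≤ degreeLT K k := by
  rintro _ ⟨u, hu, rfl⟩
  rcases eq_or_ne u 0 with rfl | hu0
  · simp
  have hlt := (natDegree_lt_iff_degree_lt hu0).mpr (mem_degreeLT.mp hu)
  have hle : (LinearMap.mulLeft K D u).natDegree ≤ D.natDegree + u.natDegree := natDegree_mul_le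
  exact mem_degreeLT.mpr (degree_le_natDegree.trans_lt (by exact_mod_cast (by omega)))

lemma card_repelling_le (hp : 1 < p.natDegree) {T : Finset ℂ}
    (hS : ∀ z ∈ S, IsRepelling p z)
    (hT : ∀ z, conjEval p z = z → z ∉ S → z ∈ T) : S.card ≤ p.natDegree + T.card := by
  obtain ⟨D, hD, hcard, hDdvd⟩ := exists_periodTwoPoly_dvd hp hS hT
  let N := (degreeLT ℂ (p.natDegree ^ 2 - D.natDegree)).map (LinearMap.mulLeft ℂ D)
  have hdvd (x : ℂ[X]) (hx : x ∈ N) (y : ℂ[X]) (hy : y ∈ N) :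
      periodTwoPoly p ∣ y * conjComp p x * ∏ r ∈ S, (X - C r) := by
    obtain ⟨u, -, rfl⟩ := hx
    obtain ⟨v, -, rfl⟩ := hy
    refine hDdvd.trans (mul_dvd_mul_right (mul_dvd_mul (dvd_mul_right D v) ?_) _)
    exact map_dvd (conjComp p) (dvd_mul_right D u)
  have : FiniteDimensional ℂ (degreeLT ℂ (p.natDegree ^ 2)) :=
    (degreeLTEquiv ℂ _).symm.finiteDimensional
  have hdim := finrank_add_finrank_le_of_isotropic (B := residueForm p) (N := N)
    (fun x => eq_zero_of_residueForm_eq_zero hp) (monomialSpan_le_degreeLT p)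
    (map_mulLeft_degreeLT_le D _) (fun x hx y hy => residueForm_monomialSpan hp hx hy)
    fun x hx hxx y hy => by
      rw [residueForm_eq_sum hp hS (hdvd x hx y hy)]
      refine Finset.sum_eq_zero fun r hr => ?_
      rw [eval_eq_zero_of_residueForm_self_eq_zero hp hS (hdvd x hx x hx) hxx hr, map_zero,
        mul_zero, zero_div]
  rw [finrank_degreeLT, finrank_map_mulLeft_degreeLT hD] at hdim
  have hW := two_mul_finrank_monomialSpan p
  have hn : p.natDegree * (p.natDegree - 1) + p.natDegree = p.natDegree ^ 2 := by
    rw [← Nat.mul_succ, Nat.succ_eq_add_one, Nat.sub_add_cancel hp.le, sq]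
  omega

lemma finite_fixedPoints_conjEval (hp : 1 < p.natDegree) :
    (Function.fixedPoints (conjEval p)).Finite :=
  (finite_setOfPred_isRoot (periodTwoPoly_ne_zero hp)).subset fun _ =>
    isRoot_periodTwoPoly_of_isFixedPt

lemma ncard_fixedPoints_conjEval_le (hp : 1 < p.natDegree) :
    (Function.fixedPoints (conjEval p)).ncard ≤ 3 * p.natDegree - 2 := by
  have hfin := finite_fixedPoints_conjEval hp
  let T := hfin.toFinset.filter fun z => ‖p.derivative.eval z‖ ≤ 1
  let S := hfin.toFinset.filter fun z => ¬‖p.derivative.eval z‖ ≤ 1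
  have hmem (z : ℂ) : z ∈ hfin.toFinset ↔ conjEval p z = z := hfin.mem_toFinset
  have hcard : T.card + S.card = (Function.fixedPoints (conjEval p)).ncard := by
    rw [Finset.card_filter_add_card_filter_not, Set.ncard_eq_toFinset_card _ hfin]
  have hT : T.card ≤ p.natDegree - 1 := card_nonrepelling_le hp fun z hz => by
    rwa [Finset.mem_filter, hmem] at hz
  have hS : S.card ≤ p.natDegree + T.card := by
    refine card_repelling_le hp (fun z hz => ?_) fun z hz hzS => ?_
    · rwa [Finset.mem_filter, hmem, not_le] at hz
    · rw [Finset.mem_filter, hmem, not_and, not_not] at hzS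
      exact Finset.mem_filter.mpr ⟨(hmem z).mpr hz, hzS hz⟩
  omega

end Repelling

end KhavinsonSwiatek

theorem khavinson_swiatek (p : Polynomial ℂ) (n : ℕ)
    (hpn : p.natDegree = n) (hn : n > 1) :
    {z : ℂ | z - (starRingEnd ℂ) (p.eval z) = 0}.Finite ∧
      {z : ℂ | z - (starRingEnd ℂ) (p.eval z) = 0}.ncard ≤ 3 * n - 2 := by
  subst hpn
  have hzeros : {z : ℂ | z - (starRingEnd ℂ) (p.eval z) = 0} =
      Function.fixedPoints (KhavinsonSwiatek.conjEval p) :=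
    Set.ext fun _ => sub_eq_zero.trans eq_comm
  rw [hzeros]
  exact ⟨KhavinsonSwiatek.finite_fixedPoints_conjEval hn,
    KhavinsonSwiatek.ncard_fixedPoints_conjEval_le hn⟩
end

section
/- Let p and q be polynomials with real coefficients, viewed as complex polynomials via the inclusion ℝ[X] → ℂ[X], with deg p = n > m = deg q, and define the harmonic polynomial f(z) = p(z) + conj(q(z)). Then the set of solutions z ∈ ℂ of f(z) = 0 satisfying (Re z)·(Im z) ≠ 0 (i.e., lying off both coordinate axes) is finite and has at most n² − n elements. -/
open Complex Polynomial

/-!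
Conjugating `f z = 0` shows that `(z, conj z)` solves the symmetric system
`p x + q y = 0`, `p y + q x = 0`. Off the diagonal, the difference of the two equations is divisible
by `x - y`, which leaves a curve of degree `n - 1` with leading form a multiple of
`∑ xⁱ y^(n - 1 - i)`, while the second equation has leading form a multiple of `yⁿ`. On a finite set
of solutions, `x ^ (n - 1)` and `y ^ n` are therefore combinations of monomials that are smaller in
the graded lexicographic order, so every monomial reduces to the `(n - 1) * n` monomials
`x ^ i * y ^ j` with `i < n - 1`, `j < n`. By Dedekind's independence of characters the monomials
span all functions on the solution set, whose cardinality is thus at most `(n - 1) * n`.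
-/

lemma encard_le_of_forall_finset_card_le {α : Type*} {s : Set α} {N : ℕ}
    (h : ∀ t : Finset α, (t : Set α) ⊆ s → t.card ≤ N) : s.encard ≤ N := by
  by_contra! hN
  obtain ⟨t, hts, ht⟩ := Set.exists_subset_encard_eq (Order.add_one_le_of_lt hN)
  have htfin : t.Finite := Set.finite_of_encard_eq_coe (k := N + 1) (by exact_mod_cast ht)
  lift t to Finset α using htfin
  rw [Set.encard_coe_eq_coe_finsetCard] at ht
  have hcard : t.card = N + 1 := by exact_mod_cast ht
  exact absurd (h t hts) (by lia)

-- Gröbner reduction: `w` plays the monomial order and `L` the set of leading monomials.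
lemma map_mem_span_image_forall_not_dvd {R A M W : Type*} [CommSemiring R] [Semiring A]
    [Algebra R A] [CommMonoid M] [Preorder W] [WellFoundedLT W] (f : M →* A) (w : M → W)
    (hw : ∀ c a b, w a < w b → w (c * a) < w (c * b)) {L : Set M}
    (hL : ∀ l ∈ L, f l ∈ Submodule.span R (f '' {a | w a < w l})) (a : M) :
    f a ∈ Submodule.span R (f '' {a | ∀ l ∈ L, ¬ l ∣ a}) := by
  induction a using WellFounded.induction (InvImage.wf w wellFounded_lt) with
  | _ a ih =>
    by_cases ha : ∀ l ∈ L, ¬ l ∣ a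
    · exact Submodule.subset_span ⟨a, ha, rfl⟩
    push Not at ha
    obtain ⟨l, hl, c, rfl⟩ := ha
    suffices h : Submodule.span R (f '' {a | w a < w l}) ≤
        (Submodule.span R (f '' {a | ∀ l ∈ L, ¬ l ∣ a})).comap (LinearMap.mulLeft R (f c)) by
      rw [mul_comm, map_mul]
      exact h (hL l hl)
    rw [Submodule.span_le]
    rintro _ ⟨b, hb, rfl⟩
    have hcb : w (c * b) < w (l * c) := mul_comm c l ▸ hw c b l hb
    simpa using ih (c * b) hcb

-- A functional vanishing on the range of `f` is a linear relation between the characters `f · i`.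
lemma span_range_eq_top_of_injective_eval {K M ι : Type*} [Field K] [Monoid M] [Finite ι]
    (f : M →* ι → K) (hf : Function.Injective fun i ↦ (Pi.evalMonoidHom (fun _ ↦ K) i).comp f) :
    Submodule.span K (Set.range f) = ⊤ := by
  classical
  have := Fintype.ofFinite ι
  by_contra hspan
  obtain ⟨φ, hφ, hle⟩ := Submodule.exists_le_ker_of_lt_top _ (lt_top_iff_ne_top.2 hspan)
  have hrel : ∑ i, φ (Pi.single i 1) • (fun a ↦ f a i) = 0 := by
    funext a
    have hφa : φ (f a) = 0 := hle (Submodule.subset_span ⟨a, rfl⟩)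
    rw [pi_eq_sum_univ' (f a), map_sum] at hφa
    simpa [mul_comm] using hφa
  have hindep := (linearIndependent_monoidHom M K).comp _ hf
  have hzero := Fintype.linearIndependent_iff.1 hindep _ hrel
  exact hφ (LinearMap.pi_ext' fun i ↦ LinearMap.ext_ring (hzero i))

section Monomials

/-- The span of the monomials `x ^ i * y ^ j` in two elements of an algebra, with exponents `(i, j)`
in a prescribed set. -/
def monomialSpan (R : Type*) {A : Type*} [CommSemiring R] [Semiring A] [Algebra R A] (x y : A)
    (S : Set (ℕ × ℕ)) : Submodule R A :=
  Submodule.span R ((fun e : ℕ × ℕ ↦ x ^ e.1 * y ^ e.2) '' S)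

/-- The monomials in two commuting elements, as a homomorphism from the monoid of exponents. -/
def monomialHom {A : Type*} [CommMonoid A] (x y : A) : Multiplicative (ℕ × ℕ) →* A where
  toFun e := x ^ e.toAdd.1 * y ^ e.toAdd.2
  map_one' := by simp
  map_mul' a b := by simp only [toAdd_mul, Prod.fst_add, Prod.snd_add, pow_add, mul_mul_mul_comm]

lemma monomialHom_ofAdd {A : Type*} [CommMonoid A] (x y : A) (i j : ℕ) :
    monomialHom x y (.ofAdd (i, j)) = x ^ i * y ^ j :=
  rfl

section Semiring

variable {R A : Type*} [CommSemiring R] [Semiring A] [Algebra R A] {x y : A} {S T : Set (ℕ × ℕ)}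

lemma pow_mul_pow_mem_monomialSpan {i j : ℕ} (h : (i, j) ∈ S) :
    x ^ i * y ^ j ∈ monomialSpan R x y S :=
  Submodule.subset_span ⟨(i, j), h, rfl⟩

lemma left_pow_mem_monomialSpan {i : ℕ} (h : (i, 0) ∈ S) : x ^ i ∈ monomialSpan R x y S := by
  simpa using pow_mul_pow_mem_monomialSpan (R := R) (x := x) (y := y) h

lemma right_pow_mem_monomialSpan {j : ℕ} (h : (0, j) ∈ S) : y ^ j ∈ monomialSpan R x y S := by
  simpa using pow_mul_pow_mem_monomialSpan (R := R) (x := x) (y := y) h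

lemma monomialSpan_mono (h : S ⊆ T) : monomialSpan R x y S ≤ monomialSpan R x y T :=
  Submodule.span_mono (Set.image_mono h)

end Semiring

section CommSemiring

variable {R A : Type*} [CommSemiring R] [CommSemiring A] [Algebra R A] {x y : A}

lemma span_image_monomialHom (T : Set (Multiplicative (ℕ × ℕ))) :
    Submodule.span R (monomialHom x y '' T) = monomialSpan R x y (Multiplicative.ofAdd ⁻¹' T) := by
  rw [← Multiplicative.ofAdd.image_preimage T, Set.image_image, Equiv.image_preimage]
  rfl

-- Both hypotheses express a power by monomials smaller in the graded lexicographic order.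
lemma pow_mul_pow_mem_monomialSpan_Iio_prod {k l : ℕ}
    (hx : x ^ k ∈ monomialSpan R x y {e | e.1 + e.2 ≤ k ∧ e.1 < k})
    (hy : y ^ l ∈ monomialSpan R x y {e | e.1 + e.2 < l}) (i j : ℕ) :
    x ^ i * y ^ j ∈ monomialSpan R x y (Set.Iio k ×ˢ Set.Iio l) := by
  let w (e : Multiplicative (ℕ × ℕ)) : ℕ ×ₗ ℕ := toLex (e.toAdd.1 + e.toAdd.2, e.toAdd.1)
  have hw (c a b) (h : w a < w b) : w (c * a) < w (c * b) := by
    simp only [w, Prod.Lex.toLex_lt_toLex, toAdd_mul, Prod.fst_add, Prod.snd_add] at h ⊢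
    lia
  let L : Set (Multiplicative (ℕ × ℕ)) := {.ofAdd (k, 0), .ofAdd (0, l)}
  have hL : ∀ a ∈ L, monomialHom x y a ∈
      Submodule.span R (monomialHom x y '' {b | w b < w a}) := by
    rintro _ (rfl | rfl) <;> rw [span_image_monomialHom, monomialHom_ofAdd, pow_zero]
    · rw [mul_one]
      refine monomialSpan_mono (fun e he ↦ Prod.Lex.toLex_lt_toLex.2 ?_) hx
      obtain ⟨hdeg, hfst⟩ := he
      exact hdeg.lt_or_eq.imp_right fun h ↦ ⟨h, hfst⟩
    · rw [one_mul]
      exact monomialSpan_mono (fun e he ↦ Prod.Lex.toLex_lt_toLex.2 (.inl (by simpa using he))) hy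
  have hmem := map_mem_span_image_forall_not_dvd (monomialHom x y) w hw hL (.ofAdd (i, j))
  rw [span_image_monomialHom, monomialHom_ofAdd] at hmem
  refine monomialSpan_mono (fun e he ↦ ?_) hmem
  have hnotle {d : ℕ × ℕ} (hd : .ofAdd d ∈ L) : ¬ d ≤ e := fun hde ↦ by
    obtain ⟨c, rfl⟩ := le_iff_exists_add.1 hde
    exact he _ hd ⟨.ofAdd c, rfl⟩
  have hk : ¬ (k, 0) ≤ e := hnotle (.inl rfl)
  have hl : ¬ (0, l) ≤ e := hnotle (.inr rfl)
  simpa [Prod.le_def] using And.intro hk hl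

end CommSemiring

lemma card_le_mul_of_pow_mem_monomialSpan {K ι : Type*} [Field K] [Fintype ι] {x y : ι → K}
    (hinj : Function.Injective fun i ↦ (x i, y i)) {k l : ℕ}
    (hx : x ^ k ∈ monomialSpan K x y {e | e.1 + e.2 ≤ k ∧ e.1 < k})
    (hy : y ^ l ∈ monomialSpan K x y {e | e.1 + e.2 < l}) : Fintype.card ι ≤ k * l := by
  classical
  have hspan : Submodule.span K (Set.range (monomialHom x y)) = ⊤ := by
    refine span_range_eq_top_of_injective_eval _ fun i j hij ↦ hinj (Prod.ext ?_ ?_)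
    · simpa [monomialHom] using DFunLike.congr_fun hij (.ofAdd (1, 0))
    · simpa [monomialHom] using DFunLike.congr_fun hij (.ofAdd (0, 1))
  have htop : monomialSpan K x y (Set.Iio k ×ˢ Set.Iio l) = ⊤ := by
    rw [eq_top_iff, ← hspan, Submodule.span_le]
    rintro _ ⟨e, rfl⟩
    exact pow_mul_pow_mem_monomialSpan_Iio_prod hx hy _ _
  let B : Finset (ι → K) :=
    (Finset.range k ×ˢ Finset.range l).image fun e ↦ x ^ e.1 * y ^ e.2
  have hB : Submodule.span K (B : Set (ι → K)) = ⊤ := by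
    simpa [B, monomialSpan] using htop
  calc Fintype.card ι = Module.finrank K (ι → K) := (Module.finrank_fintype_fun_eq_card K).symm
    _ = (B : Set (ι → K)).finrank K := by rw [Set.finrank, hB, finrank_top]
    _ ≤ B.card := finrank_span_finset_le_card B
    _ ≤ k * l := Finset.card_image_le.trans (by simp)

end Monomials

section SymmetricSystem

/-- The divided difference `(r(x) - r(y)) / (x - y)` of a polynomial `r`, written as a polynomial
expression in `x` and `y`, so that it makes sense in every algebra. -/
noncomputable def dividedDifference {R A : Type*} [CommSemiring R] [Semiring A] [Algebra R A]
    (r : R[X]) (x y : A) : A :=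
  ∑ k ∈ Finset.range (r.natDegree + 1), r.coeff k • ∑ i ∈ Finset.range k, x ^ i * y ^ (k - 1 - i)

lemma dividedDifference_mul_sub {R A : Type*} [CommSemiring R] [CommRing A] [Algebra R A]
    (r : R[X]) (x y : A) : dividedDifference r x y * (x - y) = aeval x r - aeval y r := by
  simp only [dividedDifference, Finset.sum_mul, smul_mul_assoc, (Commute.all x y).geom_sum₂_mul,
    smul_sub, Finset.sum_sub_distrib, aeval_eq_sum_range]

variable {K A : Type*} [Field K] [CommRing A] [Algebra K A] {x y : A}

lemma pow_mem_monomialSpan_of_dividedDifference_eq_zero {r : K[X]} {k : ℕ}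
    (hr : r.natDegree = k + 1) (h : dividedDifference r x y = 0) :
    x ^ k ∈ monomialSpan K x y {e | e.1 + e.2 ≤ k ∧ e.1 < k} := by
  have hlead : r.coeff (k + 1) ≠ 0 := by
    rw [← hr, coeff_natDegree, leadingCoeff_ne_zero]
    rintro rfl
    simp at hr
  have hgeom : ∑ i ∈ Finset.range (k + 1), x ^ i * y ^ (k + 1 - 1 - i) =
      ∑ i ∈ Finset.range k, x ^ i * y ^ (k - i) + x ^ k := by
    simp [Finset.sum_range_succ]
  rw [dividedDifference, hr, Finset.sum_range_succ, hgeom, smul_add, ← add_assoc] at h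
  rw [← Submodule.smul_mem_iff _ hlead, eq_neg_of_add_eq_zero_right h]
  refine neg_mem (add_mem (sum_mem fun j hj ↦ Submodule.smul_mem _ _ (sum_mem fun i hi ↦ ?_))
    (Submodule.smul_mem _ _ (sum_mem fun i hi ↦ ?_)))
  all_goals
    apply pow_mul_pow_mem_monomialSpan
    grind

lemma pow_mem_monomialSpan_of_aeval_add_aeval_eq_zero {p q : K[X]}
    (hqp : q.natDegree < p.natDegree) (h : aeval y p + aeval x q = 0) :
    y ^ p.natDegree ∈ monomialSpan K x y {e | e.1 + e.2 < p.natDegree} := by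
  have hlead : p.leadingCoeff ≠ 0 := leadingCoeff_ne_zero.2 (ne_zero_of_natDegree_gt hqp)
  rw [aeval_eq_sum_range, Finset.sum_range_succ, aeval_eq_sum_range' hqp, add_right_comm] at h
  rw [← Submodule.smul_mem_iff _ hlead, leadingCoeff, eq_neg_of_add_eq_zero_right h]
  refine neg_mem (add_mem (sum_mem fun j hj ↦ Submodule.smul_mem _ _ ?_)
    (sum_mem fun i hi ↦ Submodule.smul_mem _ _ ?_))
  · exact right_pow_mem_monomialSpan (by simpa using hj)
  · exact left_pow_mem_monomialSpan (by simpa using hi)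

lemma card_le_of_symmetric_system {ι : Type*} [Fintype ι] {x y : ι → K} {p q : K[X]}
    (hqp : q.natDegree < p.natDegree) (hinj : Function.Injective fun i ↦ (x i, y i))
    (hne : ∀ i, x i ≠ y i) (hxy : ∀ i, p.eval (x i) + q.eval (y i) = 0)
    (hyx : ∀ i, p.eval (y i) + q.eval (x i) = 0) :
    Fintype.card ι ≤ (p.natDegree - 1) * p.natDegree := by
  have hdeg : (p - q).natDegree = p.natDegree - 1 + 1 := by
    rw [natDegree_sub_eq_left_of_natDegree_lt hqp, Nat.sub_add_cancel (Nat.zero_lt_of_lt hqp)]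
  have hdd : dividedDifference (p - q) x y = 0 := by
    funext i
    have hmul := congrFun (dividedDifference_mul_sub (p - q) x y) i
    simp only [Pi.mul_apply, Pi.sub_apply, aeval_fn_apply, coe_aeval_eq_eval, eval_sub] at hmul
    refine (mul_eq_zero.1 ?_).resolve_right (sub_ne_zero.2 (hne i))
    linear_combination hmul + hxy i - hyx i
  have haeval : aeval y p + aeval x q = 0 := funext fun i ↦ by simpa using hyx i
  exact card_le_mul_of_pow_mem_monomialSpan hinj
    (pow_mem_monomialSpan_of_dividedDifference_eq_zero hdeg hdd)
    (pow_mem_monomialSpan_of_aeval_add_aeval_eq_zero hqp haeval)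

theorem encard_symmetric_system_le {p q : K[X]} (hqp : q.natDegree < p.natDegree) :
    {z : K × K | z.1 ≠ z.2 ∧ p.eval z.1 + q.eval z.2 = 0 ∧ p.eval z.2 + q.eval z.1 = 0}.encard ≤
      ((p.natDegree - 1) * p.natDegree : ℕ) := by
  refine encard_le_of_forall_finset_card_le fun t ht ↦ ?_
  rw [← Fintype.card_coe]
  exact card_le_of_symmetric_system (x := fun z : t ↦ z.1.1) (y := fun z : t ↦ z.1.2) hqp
    Subtype.val_injective (fun z ↦ (ht z.2).1) (fun z ↦ (ht z.2).2.1) (fun z ↦ (ht z.2).2.2)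

end SymmetricSystem

lemma conj_eval_map_algebraMap (r : ℝ[X]) (z : ℂ) :
    (starRingEnd ℂ) ((r.map (algebraMap ℝ ℂ)).eval z) =
      (r.map (algebraMap ℝ ℂ)).eval ((starRingEnd ℂ) z) := by
  simpa only [eval_map_algebraMap] using (aeval_conj r z).symm

theorem real_coeff_harmonic_off_axes_general (p q : ℝ[X]) (hqp : q.natDegree < p.natDegree) :
    {z : ℂ | (p.map (algebraMap ℝ ℂ)).eval z +
        (starRingEnd ℂ) ((q.map (algebraMap ℝ ℂ)).eval z) = 0 ∧ z.im ≠ 0}.Finite ∧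
      {z : ℂ | (p.map (algebraMap ℝ ℂ)).eval z +
        (starRingEnd ℂ) ((q.map (algebraMap ℝ ℂ)).eval z) = 0 ∧ z.im ≠ 0}.ncard ≤
      p.natDegree ^ 2 - p.natDegree := by
  have hbound := encard_symmetric_system_le (p := p.map (algebraMap ℝ ℂ))
    (q := q.map (algebraMap ℝ ℂ)) (by simpa only [natDegree_map] using hqp)
  rw [natDegree_map, Nat.sub_mul, one_mul, ← sq] at hbound
  refine Set.encard_le_coe_iff_finite_ncard_le.1 (le_trans ?_ hbound)
  refine Set.encard_le_encard_of_injOn (f := fun z ↦ (z, (starRingEnd ℂ) z)) ?_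
    fun z _ w _ h ↦ congrArg Prod.fst h
  rintro z ⟨hz, him⟩
  have hne : z ≠ (starRingEnd ℂ) z := fun h ↦ him (conj_eq_iff_im.1 h.symm)
  have hconj := congrArg (starRingEnd ℂ) hz
  rw [map_add, conj_conj, map_zero, conj_eval_map_algebraMap] at hconj
  rw [conj_eval_map_algebraMap] at hz
  exact ⟨hne, hz, hconj⟩

theorem real_coeff_harmonic_off_axes (p q : Polynomial ℝ) (n m : ℕ)
    (hpn : p.natDegree = n) (hqm : q.natDegree = m) (hnm : n > m) :
    {z : ℂ | (p.map (algebraMap ℝ ℂ)).eval z +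
        (starRingEnd ℂ) ((q.map (algebraMap ℝ ℂ)).eval z) = 0 ∧
        z.re * z.im ≠ 0}.Finite ∧
      {z : ℂ | (p.map (algebraMap ℝ ℂ)).eval z +
        (starRingEnd ℂ) ((q.map (algebraMap ℝ ℂ)).eval z) = 0 ∧
        z.re * z.im ≠ 0}.ncard ≤ n ^ 2 - n := by
  subst hpn hqm
  obtain ⟨hfin, hcard⟩ := real_coeff_harmonic_off_axes_general p q hnm
  have hsub {P : ℂ → Prop} : {z | P z ∧ z.re * z.im ≠ 0} ⊆ {z | P z ∧ z.im ≠ 0} :=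
    fun _ ↦ And.imp_right right_ne_zero_of_mul
  exact ⟨hfin.subset hsub, (Set.ncard_le_ncard hsub hfin).trans hcard⟩
end
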